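/- arXiv:math/0307262 — 4 statements merged into one kernel-verified Lean document; each statement's English description precedes it below -/
import Mathlib

section
/- Let n be a positive integer, 0 < α < n, and p ≤ (n+α)/(n−α). Suppose u is a positive function on ℝⁿ, continuous on ℝⁿ \ {x⁰}, unbounded in every neighborhood of x⁰, and satisfying u(x) = ∫_{ℝⁿ} |x−y|^{−(n−α)} u(y)^p dy for all x ≠ x⁰. Then u is radially symmetric about x⁰ and monotone decreasing in |x − x⁰|: if 0 < |x₁ − x⁰| ≤ |x₂ − x⁰| then u(x₁) ≥ u(x₂). -/
open MeasureTheory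


abbrev MS.E (n : ℕ) := EuclideanSpace ℝ (Fin n)

namespace MS
open EuclideanGeometry Metric Set

lemma image_inv {n : ℕ} (c : E n) {l : ℝ} (hl : 0 < l) :
    inversion c l '' (closedBall c l)ᶜ = ball c l \ {c} := by
  ext z
  simp only [mem_image, mem_compl_iff, mem_closedBall, not_le, mem_sdiff, mem_ball, mem_singleton_iff]
  constructor
  · rintro ⟨y, hy, rfl⟩
    have hyc : 0 < dist y c := hl.trans hy
    refine ⟨?_, ?_⟩
    · rw [dist_inversion_center, div_lt_iff₀ hyc]; nlinarith
    · rw [inversion_eq_center hl.ne']; rintro rfl; simp at hyc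
  · rintro ⟨h1, h2⟩
    refine ⟨inversion c l z, ?_, inversion_inversion c hl.ne' z⟩
    have : 0 < dist z c := dist_pos.2 h2
    rw [dist_inversion_center, lt_div_iff₀ this]; nlinarith

lemma fderiv_inv {n : ℕ} (c : E n) {l : ℝ} (x : E n) :
    |(((l / dist x c) ^ 2 • ((ℝ ∙ (x - c))ᗮ.reflection : E n →L[ℝ] E n)) : E n →L[ℝ] E n).det|
      = (l / dist x c) ^ (2 * n) := by
  rw [ContinuousLinearMap.det, ContinuousLinearMap.toLinearMap_smul, LinearMap.det_smul, abs_mul]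
  have := Submodule.det_reflection (𝕜 := ℝ) (ℝ ∙ (x - c))ᗮ
  have h2 : |LinearMap.det (((ℝ ∙ (x - c))ᗮ.reflection : E n →L[ℝ] E n) : E n →ₗ[ℝ] E n)| = 1 := by
    have h3 : ((((ℝ ∙ (x - c))ᗮ.reflection : E n →L[ℝ] E n) : E n →ₗ[ℝ] E n)) =
      (ℝ ∙ (x - c))ᗮ.reflection.toLinearMap := by ext; rfl
    rw [h3, this, abs_pow]; simp
  rw [h2, mul_one, finrank_euclideanSpace, Fintype.card_fin, ← pow_mul, abs_of_nonneg]
  rw [pow_mul]; positivity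

lemma cov {n : ℕ} (hn : 0 < n) (c : E n) {l : ℝ} (hl : 0 < l) (F : E n → ℝ) (hF : Integrable F) :
    IntegrableOn (fun z => (l / dist z c) ^ (2 * n) * F (inversion c l z)) (closedBall c l)ᶜ ∧
    ∫ z, F z = ∫ z in (closedBall c l)ᶜ, (F z + (l / dist z c) ^ (2 * n) * F (inversion c l z)) := by
  have : NeZero n := ⟨hn.ne'⟩
  have hs : MeasurableSet (closedBall c l)ᶜ := measurableSet_closedBall.compl
  have hd : ∀ x ∈ (closedBall c l)ᶜ, HasFDerivWithinAt (inversion c l)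
      ((l / dist x c) ^ 2 • ((ℝ ∙ (x - c))ᗮ.reflection : E n →L[ℝ] E n)) (closedBall c l)ᶜ x := by
    intro x hx
    refine (hasFDerivAt_inversion ?_).hasFDerivWithinAt
    rintro rfl; simp at hx; linarith
  have hinj : InjOn (inversion c l) (closedBall c l)ᶜ := (inversion_injective c hl.ne').injOn
  have h1 := integrableOn_image_iff_integrableOn_abs_det_fderiv_smul volume hs hd hinj F
  have h2 := integral_image_eq_integral_abs_det_fderiv_smul volume hs hd hinj F
  simp only [fderiv_inv, smul_eq_mul] at h1 h2
  have h3 := h1.1 hF.integrableOn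
  refine ⟨h3, ?_⟩
  rw [integral_add hF.integrableOn h3, ← h2, image_inv c hl, ← integral_add_compl₀ (s := closedBall c l) measurableSet_closedBall.nullMeasurableSet hF, add_comm]
  congr 1
  apply setIntegral_congr_set
  have e1 : (ball c l \ {c} : Set (E n)) =ᵐ[volume] ball c l := sdiff_null_ae_eq_self (by simp)
  refine Filter.EventuallyEq.trans ?_ e1.symm
  rw [← closedBall_sdiff_sphere]
  exact (sdiff_null_ae_eq_self (Measure.addHaar_sphere volume c l)).symm

lemma locint {n : ℕ} (hn : 0 < n) {b : ℝ} (hb : b < n) (R : ℝ) :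
    IntegrableOn (fun z : E n => ‖z‖ ^ (-b)) (ball 0 R) := by
  have : NeZero n := ⟨hn.ne'⟩
  rw [integrableOn_fun_norm_addHaar volume (f := fun r => r ^ (-b))]
  simp only [finrank_euclideanSpace, Fintype.card_fin, smul_eq_mul]
  have : IntegrableOn (fun y : ℝ => y ^ ((n:ℝ) - 1 - b)) (Ioo 0 R) := by
    rcases le_or_gt R 0 with h | h
    · simp [h]
    · rw [intervalIntegral.integrableOn_Ioo_rpow_iff h]; linarith
  refine this.congr_fun ?_ measurableSet_Ioo
  intro y hy
  have : (y:ℝ) ^ (n-1) = y ^ ((n:ℝ) - 1) := by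
    rw [← Real.rpow_natCast, Nat.cast_sub hn]; simp
  simp only [this]
  rw [← Real.rpow_add hy.1]; ring_nf


structure Sol (n : ℕ) (b p : ℝ) (x0 : E n) (u : E n → ℝ) : Prop where
  hn : 0 < n
  hb0 : 0 < b
  hbn : b < n
  hpb : p * b ≤ 2 * n - b
  pos : ∀ x, 0 < u x
  cont : ContinuousOn u {x0}ᶜ
  sing : ∀ ε > (0 : ℝ), ∀ M : ℝ, ∃ x ∈ ball x0 ε, M < u x
  eq : ∀ x ≠ x0, u x = ∫ y, dist x y ^ (-b) * u y ^ p

noncomputable def ul {n : ℕ} (b : ℝ) (u : E n → ℝ) (c : E n) (l : ℝ) (y : E n) : ℝ :=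
  (l / dist y c) ^ b * u (inversion c l y)

noncomputable def ker {n : ℕ} (b : ℝ) (c : E n) (l : ℝ) (y z : E n) : ℝ :=
  dist y z ^ (-b) - (l / dist y c) ^ b * dist (inversion c l y) z ^ (-b)

noncomputable def gl {n : ℕ} (b p : ℝ) (u : E n → ℝ) (c : E n) (l : ℝ) (z : E n) : ℝ :=
  u (inversion c l z) ^ p * (l / dist z c) ^ (2 * n - b)

lemma pq {n : ℕ} (c : E n) {l : ℝ} (hl : 0 < l) {y : E n} (hy : y ≠ c) (z : E n) :
    (dist y c * dist (inversion c l y) z / l) ^ 2 - dist y z ^ 2 =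
      (dist y c ^ 2 - l ^ 2) * (dist z c ^ 2 - l ^ 2) / l ^ 2 := by
  obtain ⟨a, rfl⟩ : ∃ a, y = a + c := ⟨y - c, by simp⟩
  obtain ⟨d, rfl⟩ : ∃ a, z = a + c := ⟨z - c, by simp⟩
  have ha : 0 < ‖a‖ := norm_pos_iff.2 (by simpa using hy)
  have h1 : dist (inversion c l (a + c)) (d + c) ^ 2 = (l / ‖a‖) ^ 4 * ‖a‖ ^ 2
      - 2 * (l / ‖a‖) ^ 2 * inner ℝ a d + ‖d‖ ^ 2 := by
    have : dist (inversion c l (a + c)) (d + c) = ‖(l / ‖a‖) ^ 2 • a - d‖ := by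
      rw [dist_eq_norm]; simp [inversion]
    rw [this, @norm_sub_sq_real, norm_smul, real_inner_smul_left]
    simp only [norm_pow, norm_div, Real.norm_eq_abs]
    rw [abs_of_pos hl, abs_norm]; ring
  have h2 : dist (a + c) (d + c) ^ 2 = ‖a‖ ^ 2 - 2 * inner ℝ a d + ‖d‖ ^ 2 := by
    rw [dist_add_right, dist_eq_norm, @norm_sub_sq_real]
  have h3 : dist (a + c) c = ‖a‖ := by simp
  have h4 : dist (d + c) c = ‖d‖ := by simp
  rw [div_pow, mul_pow, h1, h2, h3, h4]
  field_simp
  ring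

lemma ker_aux {n : ℕ} {b : ℝ} (c : E n) {l : ℝ} (hl : 0 < l) {y z : E n} (hy : y ≠ c) (hz : z ≠ c) :
    (l / dist y c) ^ b * ((l / dist z c) ^ (2 * n) * dist (inversion c l y) (inversion c l z) ^ (-b))
      = dist y z ^ (-b) * (l / dist z c) ^ (2 * n - b) := by
  have ha : 0 < dist y c := dist_pos.2 hy
  have hr : 0 < dist z c := dist_pos.2 hz
  rw [dist_inversion_inversion hy hz]
  have : l ^ 2 / (dist y c * dist z c) * dist y z = (l / dist y c) * ((l / dist z c) * dist y z) := by
    field_simp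
  rw [this, Real.mul_rpow (by positivity) (by positivity), Real.mul_rpow (by positivity) (by positivity),
    Real.rpow_sub (by positivity), Real.rpow_neg (by positivity), Real.rpow_neg (x := l / dist z c) (by positivity)]
  have h1 : (0:ℝ) < (l / dist y c) ^ b := by positivity
  have h2 : (0:ℝ) < (l / dist z c) ^ b := by positivity
  have h3 : (l / dist z c) ^ (2 * n : ℝ) = (l / dist z c) ^ (2 * n) := by
    rw [← Real.rpow_natCast]; push_cast; rfl
  rw [h3]
  field_simp

lemma ker_aux2 {n : ℕ} {b : ℝ} (c : E n) {l : ℝ} (hl : 0 < l) {y z : E n} (hy : y ≠ c) (hz : z ≠ c) :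
    ((l / dist z c) ^ (2 * n) * dist y (inversion c l z) ^ (-b))
      = (l / dist y c) ^ b * dist (inversion c l y) z ^ (-b) * (l / dist z c) ^ (2 * n - b) := by
  have ha : 0 < dist y c := dist_pos.2 hy
  have hy' : inversion c l y ≠ c := by rwa [Ne, inversion_eq_center hl.ne']
  have := ker_aux (b := b) c hl hy' hz
  rw [inversion_inversion c hl.ne', dist_inversion_center] at this
  have e : l / (l ^ 2 / dist y c) = (l / dist y c)⁻¹ := by field_simp
  rw [e, Real.inv_rpow (by positivity)] at this
  have h1 : (0:ℝ) < (l / dist y c) ^ b := by positivity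
  rw [inv_mul_eq_iff_eq_mul₀ h1.ne'] at this
  rw [this]; ring

namespace Sol
variable {n : ℕ} {b p : ℝ} {x0 : E n} {u : E n → ℝ}

lemma int (S : Sol n b p x0 u) {y : E n} (hy : y ≠ x0) :
    Integrable (fun z => dist y z ^ (-b) * u z ^ p) := by
  by_contra h
  have := S.eq y hy
  rw [integral_undef h] at this
  exact (S.pos y).ne' this

lemma inv_dist_le {c : E n} {l : ℝ} (hl : 0 < l) {y : E n} (h : l ≤ dist y c) :
    dist (inversion c l y) c ≤ l := by
  rw [dist_inversion_center, div_le_iff₀ (hl.trans_le h)]; nlinarith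

lemma inv_ne {c : E n} {l : ℝ} (hl : 0 < l) (hd : l < dist x0 c) {y : E n} (h : l ≤ dist y c) :
    inversion c l y ≠ x0 := by
  intro h'
  have := inv_dist_le hl h
  rw [h'] at this; linarith

lemma ident (S : Sol n b p x0 u) {c : E n} {l : ℝ} (hl : 0 < l) (hd : l < dist x0 c)
    {y : E n} (hy : y ≠ x0) (h : l ≤ dist y c) :
    IntegrableOn (fun z => ker b c l y z * (u z ^ p - gl b p u c l z)) (closedBall c l)ᶜ ∧
    u y - ul b u c l y = ∫ z in (closedBall c l)ᶜ, ker b c l y z * (u z ^ p - gl b p u c l z) := by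
  have hyc : y ≠ c := by rintro rfl; simp at h; linarith
  have hi := inv_ne hl hd h
  obtain ⟨a1, a2⟩ := cov S.hn c hl _ (S.int hy)
  obtain ⟨b1, b2⟩ := cov S.hn c hl _ (S.int hi)
  rw [← S.eq _ hy] at a2
  rw [← S.eq _ hi] at b2
  have A := (S.int hy).integrableOn (s := (closedBall c l)ᶜ) |>.add a1
  have B := ((S.int hi).integrableOn (s := (closedBall c l)ᶜ) |>.add b1).const_mul ((l / dist y c) ^ b)
  have key : EqOn (fun z => ((dist y z ^ (-b) * u z ^ p +
        (l / dist z c) ^ (2 * n) * (dist y (inversion c l z) ^ (-b) * u (inversion c l z) ^ p)) -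
      (l / dist y c) ^ b * (dist (inversion c l y) z ^ (-b) * u z ^ p +
        (l / dist z c) ^ (2 * n) * (dist (inversion c l y) (inversion c l z) ^ (-b) * u (inversion c l z) ^ p))))
      (fun z => ker b c l y z * (u z ^ p - gl b p u c l z)) (closedBall c l)ᶜ := by
    intro z hz
    have hzc : z ≠ c := by rintro rfl; simp at hz; linarith
    have e1 := ker_aux (b := b) c hl hyc hzc
    have e2 := ker_aux2 (b := b) c hl hyc hzc
    simp only [ker, gl]
    linear_combination (u (inversion c l z) ^ p) * e2 - (u (inversion c l z) ^ p) * e1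
  have hm : MeasurableSet (closedBall c l)ᶜ := measurableSet_closedBall.compl
  refine ⟨(A.sub B).congr_fun key hm, ?_⟩
  rw [← setIntegral_congr_fun hm key, ul, a2, b2, ← integral_const_mul]
  exact (integral_sub A B).symm

/-- lower bound -/
lemma lower (S : Sol n b p x0 u) {c : E n} (hc : c ≠ x0) :
    ∃ A > 0, ∃ r > 0, ∀ x ≠ x0, A * (dist x c + r) ^ (-b) ≤ u x := by
  have hd : 0 < dist c x0 := dist_pos.2 hc
  have hn : NeZero n := ⟨S.hn.ne'⟩
  set r := dist c x0 / 2 with hr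
  have hr0 : 0 < r := by positivity
  have hsub : closedBall c r ⊆ {x0}ᶜ := by
    intro z hz; rintro rfl; rw [mem_closedBall, dist_comm] at hz; linarith
  have hfc : ContinuousOn (fun z => u z ^ p) (closedBall c r) :=
    (S.cont.mono hsub).rpow_const fun z _ => Or.inl (S.pos z).ne'
  obtain ⟨z0, -, hz0⟩ := (isCompact_closedBall c r).exists_isMinOn ⟨c, by simp [hr0.le]⟩ hfc
  set m := u z0 ^ p
  have hm : 0 < m := Real.rpow_pos_of_pos (S.pos _) _
  have hv : 0 < volume.real (closedBall c r) := by
    rw [Measure.real, ENNReal.toReal_pos_iff]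
    exact ⟨measure_closedBall_pos _ _ hr0, measure_closedBall_lt_top⟩
  refine ⟨m * volume.real (closedBall c r), by positivity, r, hr0, fun x hx => ?_⟩
  rw [S.eq x hx]
  have i1 := S.int hx
  calc m * volume.real (closedBall c r) * (dist x c + r) ^ (-b)
      = ∫ z in closedBall c r, (dist x c + r) ^ (-b) * m := by
        simp; ring
    _ ≤ ∫ z in closedBall c r, dist x z ^ (-b) * u z ^ p := by
        refine setIntegral_mono_on_ae (integrableOn_const measure_closedBall_lt_top.ne) i1.integrableOn measurableSet_closedBall ?_
        have : ∀ᵐ z : E n, z ≠ x := by simp [ae_iff]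
        filter_upwards [this] with z hz hz'
        have hzx : 0 < dist x z := dist_pos.2 hz.symm
        have := dist_triangle x c z
        rw [mem_closedBall, dist_comm] at hz'
        have h1 : (dist x c + r) ^ (-b) ≤ dist x z ^ (-b) :=
          Real.rpow_le_rpow_of_nonpos hzx (by linarith) (by linarith [S.hb0])
        exact mul_le_mul h1 (hz0 (by rwa [mem_closedBall, dist_comm])) hm.le (by positivity)
    _ ≤ _ := setIntegral_le_integral i1 (Filter.Eventually.of_forall fun z =>
        mul_nonneg (by positivity) (Real.rpow_nonneg (S.pos z).le _))

lemma lowerR (S : Sol n b p x0 u) {c : E n} (hc : c ≠ x0) (R : ℝ) :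
    ∃ m > 0, ∀ x ≠ x0, dist x c ≤ R → m ≤ u x := by
  obtain ⟨A, hA, r, hr, h⟩ := S.lower hc
  refine ⟨A * (|R| + r) ^ (-b), by positivity, fun x hx hxR => le_trans ?_ (h x hx)⟩
  gcongr A * ?_
  exact Real.rpow_le_rpow_of_nonpos (by positivity) (by linarith [le_abs_self R]) (by linarith [S.hb0])

/-- kernel integrals are locally bounded -/
lemma kerint (S : Sol n b p x0 u) (y : E n) (R : ℝ) :
    IntegrableOn (fun z => dist y z ^ (-b)) (ball y R) := by
  have h := locint S.hn S.hbn R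
  have := (measurePreserving_sub_right volume y).integrableOn_comp_preimage
    (MeasurableEquiv.subRight y).measurableEmbedding (f := fun z : E n => ‖z‖ ^ (-b)) (s := ball 0 R)
  have h2 := this.2 h
  have e : (fun x => x - y) ⁻¹' ball 0 R = ball y R := by ext; simp [dist_eq_norm]
  rw [e] at h2
  refine h2.congr_fun (fun z _ => ?_) measurableSet_ball
  simp [dist_eq_norm, norm_sub_rev]


lemma kerint_shift (y : E n) (R : ℝ) :
    ∫ z in ball y R, dist y z ^ (-b) = ∫ z in ball (0 : E n) R, ‖z‖ ^ (-b) := by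
  have := (measurePreserving_sub_right volume y).setIntegral_preimage_emb
    (MeasurableEquiv.subRight y).measurableEmbedding (fun z : E n => ‖z‖ ^ (-b)) (ball 0 R)
  have e : (fun x => x - y) ⁻¹' ball 0 R = ball y R := by ext; simp [dist_eq_norm]
  rw [e] at this
  rw [← this]
  refine setIntegral_congr_fun measurableSet_ball (fun z _ => ?_)
  simp [dist_eq_norm, norm_sub_rev]

/-- absolute continuity, uniform in the pole -/
lemma kersmall (S : Sol n b p x0 u) (R : ℝ) {κ : ℝ} (hκ : 0 < κ) :
    ∃ ρ > 0, ∀ (y : E n) (A : Set (E n)), MeasurableSet A → A ⊆ ball y R → volume.real A < ρ →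
      ∫ z in A, dist y z ^ (-b) ≤ κ := by
  have h := locint S.hn S.hbn R
  have hfin : ∫⁻ z in ball (0 : E n) R, ENNReal.ofReal (‖z‖ ^ (-b)) ≠ ⊤ := by
    have := h.lintegral_lt_top
    exact this.ne
  obtain ⟨δ, hδ0, hδ⟩ := exists_pos_setLIntegral_lt_of_measure_lt hfin (ε := ENNReal.ofReal κ) (by simpa using hκ)
  obtain ⟨ρ, hρ0, hρ⟩ : ∃ ρ : ℝ, 0 < ρ ∧ ENNReal.ofReal ρ ≤ δ := by
    rcases eq_or_ne δ ⊤ with h | h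
    · exact ⟨1, one_pos, by simp [h]⟩
    · exact ⟨δ.toReal, ENNReal.toReal_pos hδ0.ne' h, by rw [ENNReal.ofReal_toReal h]⟩
  refine ⟨ρ, hρ0, fun y A hA hAR hAv => ?_⟩
  set B : Set (E n) := (fun x => x + y) ⁻¹' A with hB
  have hBm : MeasurableSet B := measurable_add_const y hA
  have hBR : B ⊆ ball 0 R := by
    intro z hz
    have := hAR hz
    simpa [dist_eq_norm] using this
  have hAfin : volume A ≠ ⊤ := ((measure_mono hAR).trans_lt measure_ball_lt_top).ne
  have hBv : volume B = volume A :=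
    (measurePreserving_add_right volume y).measure_preimage hA.nullMeasurableSet
  have e : ∫ z in A, dist y z ^ (-b) = ∫ z in B, ‖z‖ ^ (-b) := by
    have := (measurePreserving_add_right volume y).setIntegral_preimage_emb
      (MeasurableEquiv.addRight y).measurableEmbedding (fun z : E n => dist y z ^ (-b)) A
    rw [← this]
    refine setIntegral_congr_fun hBm (fun z _ => ?_)
    simp
  rw [e, integral_eq_lintegral_of_nonneg_ae (Filter.Eventually.of_forall fun z => by positivity)
    (h.mono_set hBR).aestronglyMeasurable]
  refine ENNReal.toReal_le_of_le_ofReal hκ.le ?_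
  have h1 : volume.restrict (ball (0 : E n) R) B < δ := by
    rw [Measure.restrict_apply hBm, inter_eq_left.2 hBR, hBv]
    refine lt_of_lt_of_le ?_ hρ
    rwa [← ENNReal.ofReal_toReal hAfin, ENNReal.ofReal_lt_ofReal_iff hρ0]
  have h2 := hδ B h1
  rw [Measure.restrict_restrict hBm, inter_eq_left.2 hBR] at h2
  exact h2.le

lemma p_pos (S : Sol n b p x0 u) : 0 < p := by
  by_contra! hp
  have hn : NeZero n := ⟨S.hn.ne'⟩
  obtain ⟨z0, hz0⟩ : ∃ z0 : E n, dist z0 x0 = 1 := by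
    obtain ⟨v, hv⟩ := exists_norm_eq (E n) (zero_le_one (α := ℝ))
    exact ⟨v + x0, by simpa using hv⟩
  have hz : z0 ≠ x0 := by rintro rfl; simp at hz0
  obtain ⟨m, hm, hlow⟩ := S.lowerR hz 2
  set C := ∫ z in ball (0 : E n) 2, ‖z‖ ^ (-b) with hC
  obtain ⟨x, hx, hxM⟩ := S.sing (1 / 2) (by norm_num) (max (u x0) (m ^ p * C + 4 ^ b * u z0))
  have hxx : x ≠ x0 := by
    rintro rfl; exact absurd hxM (not_lt.2 (le_max_left _ _))
  have hxM := (le_max_right _ _).trans_lt hxM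
  rw [mem_ball] at hx
  have i1 := S.int hxx
  have hae : ∀ᵐ z : E n, z ≠ x0 := by simp [ae_iff]
  have h1 : ∫ z in ball x0 1, dist x z ^ (-b) * u z ^ p ≤ m ^ p * C := by
    calc _ ≤ ∫ z in ball x0 1, dist x z ^ (-b) * m ^ p := by
          refine setIntegral_mono_on_ae i1.integrableOn ?_ measurableSet_ball ?_
          · refine (((S.kerint x 2).mono_set ?_).mul_const _)
            exact ball_subset_ball' (by rw [dist_comm]; linarith)
          · filter_upwards [hae] with z hz hz'
            refine mul_le_mul_of_nonneg_left ?_ (by positivity)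
            refine Real.rpow_le_rpow_of_nonpos hm (hlow z hz ?_) hp
            have := dist_triangle_right z z0 x0
            rw [mem_ball] at hz'; linarith
      _ = m ^ p * ∫ z in ball x0 1, dist x z ^ (-b) := by rw [integral_mul_const, mul_comm]
      _ ≤ m ^ p * ∫ z in ball x 2, dist x z ^ (-b) := by
          refine mul_le_mul_of_nonneg_left ?_ (by positivity)
          refine setIntegral_mono_set (S.kerint x 2) (Filter.Eventually.of_forall fun z => by positivity) ?_
          exact (ball_subset_ball' (by rw [dist_comm]; linarith)).eventuallyLE
      _ = m ^ p * C := by rw [kerint_shift]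
  have h2 : ∫ z in (ball x0 1)ᶜ, dist x z ^ (-b) * u z ^ p ≤ 4 ^ b * u z0 := by
    have i2 := (S.int hz).const_mul (4 ^ b)
    calc _ ≤ ∫ z in (ball x0 1)ᶜ, 4 ^ b * (dist z0 z ^ (-b) * u z ^ p) := by
          refine setIntegral_mono_on_ae i1.integrableOn i2.integrableOn measurableSet_ball.compl ?_
          have : ∀ᵐ z : E n, z ≠ z0 := by simp [ae_iff]
          filter_upwards [this] with z hz' hzb
          simp only [mem_compl_iff, mem_ball, not_lt] at hzb
          have t1 := dist_triangle_left z x0 x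
          have t2 := dist_triangle_right z0 z x0
          have : dist z0 z / 4 ≤ dist x z := by linarith
          have hpos : 0 < dist z0 z := dist_pos.2 hz'.symm
          have h3 : dist x z ^ (-b) ≤ (dist z0 z / 4) ^ (-b) :=
            Real.rpow_le_rpow_of_nonpos (by positivity) this (by linarith [S.hb0])
          rw [Real.div_rpow hpos.le (by norm_num), Real.rpow_neg (x := 4) (by norm_num), div_inv_eq_mul] at h3
          rw [← mul_assoc]
          refine mul_le_mul_of_nonneg_right (by linarith) (Real.rpow_nonneg (S.pos z).le _)
      _ ≤ ∫ z, 4 ^ b * (dist z0 z ^ (-b) * u z ^ p) := 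
          setIntegral_le_integral i2 (Filter.Eventually.of_forall fun z =>
            mul_nonneg (by positivity) (mul_nonneg (by positivity) (Real.rpow_nonneg (S.pos z).le _)))
      _ = _ := by rw [integral_const_mul, ← S.eq _ hz]
  have h3 := S.eq x hxx
  rw [← integral_add_compl₀ (s := ball x0 1) measurableSet_ball.nullMeasurableSet i1] at h3
  linarith

lemma ker_eq (c : E n) {l : ℝ} (hl : 0 < l) (b : ℝ) {y : E n} (hy : y ≠ c) (z : E n) :
    ker b c l y z = dist y z ^ (-b) - (dist y c * dist (inversion c l y) z / l) ^ (-b) := by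
  have ha : 0 < dist y c := dist_pos.2 hy
  have : dist y c * dist (inversion c l y) z / l = (l / dist y c)⁻¹ * dist (inversion c l y) z := by
    field_simp
  rw [ker, this, Real.mul_rpow (by positivity) (by positivity), Real.inv_rpow (by positivity),
    Real.rpow_neg (by positivity) b, Real.rpow_neg (by positivity) b,
    Real.rpow_neg (by positivity) b, inv_inv]

lemma ker_le (c : E n) {l : ℝ} (hl : 0 < l) (b : ℝ) (y z : E n) :
    ker b c l y z ≤ dist y z ^ (-b) := by
  rw [ker]
  have : 0 ≤ (l / dist y c) ^ b * dist (inversion c l y) z ^ (-b) := by positivity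
  linarith

lemma ker_nonneg (c : E n) {l : ℝ} (hl : 0 < l) {b : ℝ} (hb : 0 < b) {y z : E n}
    (hy : l ≤ dist y c) (hz : l ≤ dist z c) (hyz : z ≠ y) : 0 ≤ ker b c l y z := by
  have hyc : y ≠ c := by rintro rfl; simp at hy; linarith
  have hQ : 0 < dist y z := dist_pos.2 hyz.symm
  rw [ker_eq c hl b hyc, sub_nonneg]
  refine Real.rpow_le_rpow_of_nonpos hQ ?_ (by linarith)
  refine (sq_le_sq₀ (by positivity) (by positivity)).1 ?_
  have h := pq c hl hyc z
  have : 0 ≤ (dist y c ^ 2 - l ^ 2) * (dist z c ^ 2 - l ^ 2) / l ^ 2 := by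
    have h1 : 0 ≤ dist y c ^ 2 - l ^ 2 := by nlinarith
    have h2 : 0 ≤ dist z c ^ 2 - l ^ 2 := by nlinarith
    positivity
  linarith

lemma ker_lower (c : E n) {l : ℝ} (hl : 0 < l) {b : ℝ} (hb : 0 < b) {r1 r2 r3 : ℝ}
    (h1 : l < r1) (h2 : l < r2) (h3 : 0 < r3) : ∃ k > 0, ∀ y z : E n, r1 ≤ dist y c → r2 ≤ dist z c →
      dist z c ≤ r3 → z ≠ y → k ≤ dist y c ^ b * ker b c l y z := by
  set C := 1 + r3 / l with hC
  have hC0 : 0 < C := by positivity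
  set θ := (1 - l ^ 2 / r1 ^ 2) * ((r2 ^ 2 - l ^ 2) / l ^ 2) with hθ
  have hr1 : 0 < r1 := hl.trans h1
  have hθ1 : 0 < 1 - l ^ 2 / r1 ^ 2 := by
    rw [sub_pos, div_lt_one (by positivity)]; nlinarith
  have hθ2 : 0 < (r2 ^ 2 - l ^ 2) / l ^ 2 := by
    apply div_pos _ (by positivity); nlinarith
  have hθ0 : 0 < θ := mul_pos hθ1 hθ2
  set s := Real.sqrt (1 + θ / C ^ 2) with hs
  have hs1 : 1 < s := by
    rw [hs, Real.lt_sqrt (by norm_num)]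
    have : 0 < θ / C ^ 2 := by positivity
    linarith
  have hss : s ^ 2 = 1 + θ / C ^ 2 := Real.sq_sqrt (by positivity)
  have hsb : s ^ (-b) < 1 := Real.rpow_lt_one_of_one_lt_of_neg hs1 (by linarith)
  refine ⟨C ^ (-b) * (1 - s ^ (-b)), mul_pos (by positivity) (by linarith), ?_⟩
  intro y z hy hz hz3 hyz
  have ha : 0 < dist y c := by linarith
  have hyc : y ≠ c := dist_pos.1 ha
  have hQ : 0 < dist y z := dist_pos.2 hyz.symm
  rw [ker_eq c hl b hyc]
  set P := dist y c * dist (inversion c l y) z / l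
  set Q := dist y z
  set a := dist y c
  have hQC : Q ≤ C * a := by
    have t := dist_triangle_right y z c
    have : r3 ≤ r3 / l * a := by
      rw [div_mul_eq_mul_div, le_div_iff₀ hl]; gcongr; linarith
    rw [hC]; linarith
  have hP : s * Q ≤ P := by
    refine (sq_le_sq₀ (by positivity) (by positivity)).1 ?_
    have h := pq c hl hyc z
    have e1 : θ * a ^ 2 ≤ (a ^ 2 - l ^ 2) * (dist z c ^ 2 - l ^ 2) / l ^ 2 := by
      have f1 : (1 - l ^ 2 / r1 ^ 2) * a ^ 2 ≤ a ^ 2 - l ^ 2 := by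
        have : l ^ 2 ≤ l ^ 2 / r1 ^ 2 * a ^ 2 := by
          rw [div_mul_eq_mul_div, le_div_iff₀ (by positivity)]; gcongr
        linarith
      have f2 : (r2 ^ 2 - l ^ 2) / l ^ 2 ≤ (dist z c ^ 2 - l ^ 2) / l ^ 2 := by
        have hr2 : 0 ≤ r2 := by linarith
        gcongr
      calc θ * a ^ 2 = ((1 - l ^ 2 / r1 ^ 2) * a ^ 2) * ((r2 ^ 2 - l ^ 2) / l ^ 2) := by rw [hθ]; ring
        _ ≤ (a ^ 2 - l ^ 2) * ((dist z c ^ 2 - l ^ 2) / l ^ 2) :=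
          mul_le_mul f1 f2 hθ2.le (by nlinarith)
        _ = _ := by ring
    have e2 : θ / C ^ 2 * Q ^ 2 ≤ θ * a ^ 2 := by
      rw [div_mul_eq_mul_div, div_le_iff₀ (by positivity)]
      have : Q ^ 2 ≤ (C * a) ^ 2 := by gcongr
      nlinarith
    rw [mul_pow, hss]
    linarith
  have g1 : P ^ (-b) ≤ s ^ (-b) * Q ^ (-b) := by
    rw [← Real.mul_rpow (by positivity) hQ.le]
    exact Real.rpow_le_rpow_of_nonpos (by positivity) hP (by linarith)
  have g2 : C ^ (-b) ≤ a ^ b * Q ^ (-b) := by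
    have := Real.rpow_le_rpow_of_nonpos hQ hQC (by linarith : -b ≤ 0)
    rw [Real.mul_rpow hC0.le ha.le] at this
    calc C ^ (-b) = a ^ b * (C ^ (-b) * a ^ (-b)) := by
          rw [Real.rpow_neg ha.le]
          have : a ^ b ≠ 0 := by positivity
          field_simp
      _ ≤ _ := by gcongr
  calc _ ≤ (a ^ b * Q ^ (-b)) * (1 - s ^ (-b)) := by
        apply mul_le_mul_of_nonneg_right g2; linarith
    _ = a ^ b * (Q ^ (-b) - s ^ (-b) * Q ^ (-b)) := by ring
    _ ≤ _ := by gcongr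

lemma lip {p : ℝ} (hp : 0 < p) {m M : ℝ} (hm : 0 < m) (hM : 0 < M) : ∃ L > 0, ∀ s t : ℝ, m ≤ s → s ≤ t → t ≤ M →
    t ^ p - s ^ p ≤ L * (t - s) := by
  refine ⟨p * (m ^ (p - 1) + M ^ (p - 1)), by positivity, fun s t hs hst htM => ?_⟩
  refine (convex_Icc m M).image_sub_le_mul_sub_of_deriv_le (f := fun x => x ^ p) ?_ ?_ ?_ s ⟨hs, hst.trans htM⟩ t
    ⟨hs.trans hst, htM⟩ hst
  · intro x hx
    exact (Real.continuousAt_rpow_const _ _ (Or.inr hp.le)).continuousWithinAt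
  · intro x hx
    rw [interior_Icc] at hx
    exact (Real.differentiableAt_rpow_const_of_ne p (hm.trans hx.1).ne').differentiableWithinAt
  · intro x hx
    rw [interior_Icc] at hx
    have hx0 : 0 < x := hm.trans hx.1
    rw [Real.deriv_rpow_const]
    gcongr
    rcases le_or_gt 1 p with h | h
    · have : x ^ (p - 1) ≤ M ^ (p - 1) := Real.rpow_le_rpow hx0.le hx.2.le (by linarith)
      have : 0 < m ^ (p - 1) := by positivity
      linarith
    · have : x ^ (p - 1) ≤ m ^ (p - 1) := Real.rpow_le_rpow_of_nonpos hm hx.1.le (by linarith)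
      have : 0 < M ^ (p - 1) := by positivity
      linarith

lemma upper (S : Sol n b p x0 u) {c : E n} {l1 : ℝ} (h1 : l1 < dist x0 c) :
    ∃ M > 0, ∀ z ∈ closedBall c l1, u z ≤ M := by
  have hsub : closedBall c l1 ⊆ {x0}ᶜ := by
    intro z hz; rintro rfl; rw [mem_closedBall] at hz; linarith
  obtain ⟨M, hM⟩ := (isCompact_closedBall c l1).bddAbove_image (S.cont.mono hsub)
  refine ⟨max M 1, by positivity, fun z hz => le_max_of_le_left (hM ⟨z, hz, rfl⟩)⟩

lemma ul_le (S : Sol n b p x0 u) {c : E n} {l l1 M : ℝ} (hl : 0 < l) (hl1 : l ≤ l1)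
    (hM : ∀ z ∈ closedBall c l1, u z ≤ M) {y : E n} (hy : l ≤ dist y c) :
    ul b u c l y ≤ (l / dist y c) ^ b * M := by
  rw [ul]
  gcongr
  exact hM _ ((inv_dist_le hl hy).trans hl1)

lemma ul_le' (S : Sol n b p x0 u) {c : E n} {l l1 M : ℝ} (hl : 0 < l) (hl1 : l ≤ l1)
    (hM : ∀ z ∈ closedBall c l1, u z ≤ M) {y : E n} (hy : l ≤ dist y c) :
    ul b u c l y ≤ M := by
  refine (S.ul_le hl hl1 hM hy).trans ?_
  have h0 : 0 < dist y c := by linarith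
  have hM0 : 0 < M := (S.pos c).trans_le (hM c (by simp; linarith))
  have : (l / dist y c) ^ b ≤ 1 := by
    refine Real.rpow_le_one (by positivity) ?_ S.hb0.le
    rwa [div_le_one h0]
  nlinarith

lemma ul_pos (S : Sol n b p x0 u) {c : E n} {l : ℝ} (hl : 0 < l) {y : E n} (hy : l ≤ dist y c) :
    0 < ul b u c l y := by
  have := S.pos (inversion c l y)
  have h0 : 0 < dist y c := by linarith
  rw [ul]; positivity

lemma gl_le (S : Sol n b p x0 u) {c : E n} {l : ℝ} (hl : 0 < l) {y : E n} (hy : l ≤ dist y c) :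
    gl b p u c l y ≤ ul b u c l y ^ p := by
  have := S.pos (inversion c l y)
  have h0 : 0 < dist y c := by linarith
  rw [gl, ul, Real.mul_rpow (by positivity) this.le, ← Real.rpow_mul (by positivity), mul_comm]
  refine mul_le_mul_of_nonneg_right ?_ (by positivity)
  refine Real.rpow_le_rpow_of_exponent_ge (by positivity) ?_ (by linarith [S.hpb])
  rwa [div_le_one h0]

lemma small (S : Sol n b p x0 u) {c : E n} (hc : c ≠ x0) {l1 : ℝ} (hl1 : 0 < l1) (h1 : l1 < dist x0 c) (R : ℝ) :
    ∃ ρ > 0, ∀ l, 0 < l → l ≤ l1 → ∀ A : Set (E n), MeasurableSet A → A ⊆ ball c R → volume.real A < ρ →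
      (∀ y ≠ x0, l ≤ dist y c → u y < ul b u c l y → y ∈ A) →
      ∀ y ≠ x0, l ≤ dist y c → ul b u c l y ≤ u y := by
  have hn : NeZero n := ⟨S.hn.ne'⟩
  obtain ⟨M, hM0, hM⟩ := S.upper h1
  obtain ⟨m, hm0, hm⟩ := S.lowerR hc R
  obtain ⟨L, hL0, hL⟩ := lip S.p_pos hm0 hM0
  obtain ⟨ρ, hρ0, hρ⟩ := S.kersmall (2 * R) (κ := 1 / (2 * L)) (by positivity)
  refine ⟨ρ, hρ0, fun l hl hll A hAm hAR hAv hA => ?_⟩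
  by_contra! hcon
  set T : Set ℝ := {t | ∃ y, y ≠ x0 ∧ l ≤ dist y c ∧ u y < ul b u c l y ∧ t = ul b u c l y - u y} with hT
  have hTne : T.Nonempty := by
    obtain ⟨y, h_a, h_b, h_c⟩ := hcon
    exact ⟨_, y, h_a, h_b, h_c, rfl⟩
  have hTb : BddAbove T := by
    refine ⟨M, ?_⟩
    rintro t ⟨y, h_a, h_b, h_c, rfl⟩
    linarith [S.pos y, S.ul_le' hl hll hM h_b]
  set s := sSup T with hs
  have hs0 : 0 < s := by
    obtain ⟨t, ht⟩ := hTne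
    have := le_csSup hTb ht
    obtain ⟨y, h_a, h_b, h_c, rfl⟩ := ht
    linarith
  obtain ⟨t, ⟨y, hy0, hyl, hyu, rfl⟩, hts⟩ := exists_lt_of_lt_csSup hTne (half_lt_self hs0)
  have hyA := hA y hy0 hyl hyu
  have hAy : A ⊆ ball y (2 * R) := by
    intro z hz
    have e1 := hAR hz
    have e2 := hAR hyA
    rw [mem_ball] at *
    have := dist_triangle_right z y c
    linarith
  obtain ⟨j1, j2⟩ := S.ident hl (hll.trans_lt h1) hy0 hyl
  have hLi : IntegrableOn (fun z => dist y z ^ (-b) * (L * s)) A :=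
    ((S.kerint y (2 * R)).mono_set hAy).mul_const _
  have hin : Integrable (A.indicator (fun z => dist y z ^ (-b) * (L * s))) :=
    hLi.integrable_indicator hAm
  have hnn : ∀ z, 0 ≤ A.indicator (fun z => dist y z ^ (-b) * (L * s)) z := by
    intro z; apply indicator_nonneg; intro z _; positivity
  have key : ul b u c l y - u y ≤ s / 2 := by
    calc ul b u c l y - u y = ∫ z in (closedBall c l)ᶜ, -(ker b c l y z * (u z ^ p - gl b p u c l z)) := by
          rw [integral_neg, ← j2]; ring
      _ ≤ ∫ z in (closedBall c l)ᶜ, A.indicator (fun z => dist y z ^ (-b) * (L * s)) z := by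
          refine setIntegral_mono_on_ae j1.neg hin.integrableOn measurableSet_closedBall.compl ?_
          have a1 : ∀ᵐ z : E n, z ≠ x0 := by simp [ae_iff]
          have a2 : ∀ᵐ z : E n, z ≠ y := by simp [ae_iff]
          filter_upwards [a1, a2] with z hz0 hzy hz
          simp only [mem_compl_iff, mem_closedBall, not_le] at hz
          have hK0 := ker_nonneg c hl S.hb0 hyl hz.le hzy
          have hK1 := ker_le c hl b y z
          rcases le_or_gt (gl b p u c l z) (u z ^ p) with h | h
          · refine le_trans ?_ (hnn z)
            have := mul_nonneg hK0 (sub_nonneg.2 h)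
            linarith
          · have hg := S.gl_le hl hz.le
            have hup := S.ul_pos hl hz.le
            have hlt : u z < ul b u c l z :=
              (Real.rpow_lt_rpow_iff (S.pos z).le hup.le S.p_pos).1 (h.trans_le hg)
            have hzA := hA z hz0 hz.le hlt
            rw [indicator_of_mem hzA]
            have q1 := hL (u z) (ul b u c l z) (hm z hz0 (mem_ball.1 (hAR hzA)).le) hlt.le
              (S.ul_le' hl hll hM hz.le)
            have q2 : ul b u c l z - u z ≤ s := le_csSup hTb ⟨z, hz0, hz.le, hlt, rfl⟩
            have q3 : L * (ul b u c l z - u z) ≤ L * s := by gcongr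
            rw [← mul_neg]
            exact mul_le_mul hK1 (by linarith) (by linarith) (by positivity)
      _ ≤ ∫ z, A.indicator (fun z => dist y z ^ (-b) * (L * s)) z :=
          setIntegral_le_integral hin (Filter.Eventually.of_forall hnn)
      _ = (∫ z in A, dist y z ^ (-b)) * (L * s) := by
          rw [integral_indicator hAm, integral_mul_const]
      _ ≤ 1 / (2 * L) * (L * s) := by
          gcongr
          exact hρ y A hAm hAy hAv
      _ = s / 2 := by field_simp
  linarith

lemma annulus (hn : 0 < n) (c : E n) {l : ℝ} (hl : 0 ≤ l) {ρ : ℝ} (hρ : 0 < ρ) :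
    ∃ η > 0, η ≤ 1 ∧ volume.real (ball c (l + η) \ ball c l) < ρ := by
  have hn' : NeZero n := ⟨hn.ne'⟩
  have e : ∀ η : ℝ, 0 ≤ η → volume.real (ball c (l + η) \ ball c l)
      = ((l + η) ^ n - l ^ n) * volume.real (ball (0 : E n) 1) := by
    intro η hη
    rw [measureReal_sdiff (ball_subset_ball (by linarith)) measurableSet_ball measure_ball_lt_top.ne,
      measureReal_def, measureReal_def, Measure.addHaar_ball _ _ (by linarith), Measure.addHaar_ball _ _ hl,
      ENNReal.toReal_mul, ENNReal.toReal_mul, ENNReal.toReal_ofReal (by positivity),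
      ENNReal.toReal_ofReal (by positivity), measureReal_def]
    simp only [finrank_euclideanSpace, Fintype.card_fin]
    ring
  have ht : Filter.Tendsto (fun η : ℝ => ((l + η) ^ n - l ^ n) * volume.real (ball (0 : E n) 1))
      (nhdsWithin 0 (Ioi 0)) (nhds 0) := by
    have : Continuous (fun η : ℝ => ((l + η) ^ n - l ^ n) * volume.real (ball (0 : E n) 1)) := by fun_prop
    have := (this.tendsto 0).mono_left (nhdsWithin_le_nhds (s := Ioi 0))
    simpa using this
  have h1 := ht.eventually (gt_mem_nhds hρ)
  have h2 : ∀ᶠ η : ℝ in nhdsWithin 0 (Ioi 0), η ∈ Ioc 0 1 := Ioc_mem_nhdsGT one_pos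
  obtain ⟨η, h1, h2⟩ := (h1.and h2).exists
  exact ⟨η, h2.1, h2.2, by rw [e η h2.1.le]; exact h1⟩

def good (b : ℝ) (x0 : E n) (u : E n → ℝ) (c : E n) (l : ℝ) : Prop :=
  ∀ y ≠ x0, l ≤ dist y c → ul b u c l y ≤ u y

lemma start (S : Sol n b p x0 u) {c : E n} (hc : c ≠ x0) :
    ∃ l0 > 0, ∀ l, 0 < l → l ≤ l0 → good b x0 u c l := by
  have hd : 0 < dist x0 c := dist_pos.2 hc.symm
  obtain ⟨M, hM0, hM⟩ := S.upper (c := c) (half_lt_self hd)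
  obtain ⟨A, hA0, r, hr0, hA⟩ := S.lower hc
  obtain ⟨ρ, hρ0, hρ⟩ := S.small hc (half_pos hd) (half_lt_self hd) 2
  obtain ⟨t, ht0, ht1, ht⟩ := annulus S.hn c le_rfl hρ0
  rw [zero_add, ball_zero, sdiff_empty] at ht
  set κ := (M / A) ^ (1 / b) with hκ
  have hκ0 : 0 < κ := by positivity
  have hκb : κ ^ b = M / A := by
    rw [hκ, ← Real.rpow_mul (by positivity), one_div_mul_cancel S.hb0.ne', Real.rpow_one]
  refine ⟨min (dist x0 c / 2) (min (1 / (2 * κ)) (t / (2 * κ * r))), by positivity, fun l hl hll => ?_⟩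
  have l1 : l ≤ dist x0 c / 2 := hll.trans (min_le_left _ _)
  have l2 : l ≤ 1 / (2 * κ) := hll.trans ((min_le_right _ _).trans (min_le_left _ _))
  have l3 : l ≤ t / (2 * κ * r) := hll.trans ((min_le_right _ _).trans (min_le_right _ _))
  rw [le_div_iff₀ (by positivity)] at l2 l3
  refine hρ l hl l1 (ball c t) measurableSet_ball (ball_subset_ball (by linarith)) ht ?_
  intro y hy0 hyl hyu
  have hD : 0 < dist y c := by linarith
  have e1 := S.ul_le (b := b) hl l1 hM hyl
  have e2 := hA y hy0
  have e3 : A * (dist y c + r) ^ (-b) < (l / dist y c) ^ b * M := by linarith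
  have e4 : dist y c ^ b < (l * κ * (dist y c + r)) ^ b := by
    rw [Real.mul_rpow (by positivity) (by positivity), Real.mul_rpow hl.le hκ0.le, hκb]
    rw [Real.rpow_neg (by positivity), Real.div_rpow hl.le hD.le] at e3
    have p1 : 0 < (dist y c + r) ^ b := by positivity
    have p2 : 0 < dist y c ^ b := by positivity
    rw [← div_eq_mul_inv, div_mul_eq_mul_div, div_lt_div_iff₀ p1 p2] at e3
    rw [mul_div_assoc', div_mul_eq_mul_div, lt_div_iff₀ hA0]
    linarith
  have e5 := (Real.rpow_lt_rpow_iff hD.le (by positivity) S.hb0).1 e4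
  rw [mem_ball]
  nlinarith

lemma wlower (S : Sol n b p x0 u) {c : E n} {l : ℝ} (hl : 0 < l) (hd : l < dist x0 c)
    (hg : good b x0 u c l) {η : ℝ} (hη : 0 < η) :
    ∃ e > 0, ∀ y ≠ x0, l + η ≤ dist y c → e ≤ dist y c ^ b * (u y - ul b u c l y) := by
  have hn : NeZero n := ⟨S.hn.ne'⟩
  obtain ⟨M, hM0, hM⟩ := S.upper hd
  set ε := (dist x0 c - l) / 2 with hε
  have hε0 : 0 < ε := by linarith
  obtain ⟨z0, hz0, hz0M⟩ := S.sing ε hε0 (max (u x0) (2 * M))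
  have hzx : z0 ≠ x0 := by
    rintro rfl; exact absurd hz0M (not_lt.2 (le_max_left _ _))
  have hz0M := (le_max_right _ _).trans_lt hz0M
  have hca : ContinuousAt u z0 := S.cont.continuousAt (isOpen_compl_singleton.mem_nhds hzx)
  have hnb : ∀ᶠ z in nhds z0, 2 * M < u z ∧ z ∈ ball x0 ε :=
    (hca.eventually (lt_mem_nhds hz0M)).and (isOpen_ball.mem_nhds hz0)
  obtain ⟨s, hs0, hs⟩ := Metric.eventually_nhds_iff_ball.1 hnb
  obtain ⟨k, hk0, hk⟩ := ker_lower c hl S.hb0 (r1 := l + η) (r2 := l + ε) (r3 := dist x0 c + ε)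
    (by linarith) (by linarith) (by linarith)
  set h0 := (2 * M) ^ p - M ^ p with hh
  have hh0 : 0 < h0 := sub_pos.2 (Real.rpow_lt_rpow hM0.le (by linarith) S.p_pos)
  have hv : 0 < volume.real (ball z0 s) := by
    rw [Measure.real, ENNReal.toReal_pos_iff]
    exact ⟨measure_ball_pos _ _ hs0, measure_ball_lt_top⟩
  have hgeo : ∀ z ∈ ball z0 s, l + ε ≤ dist z c ∧ dist z c ≤ dist x0 c + ε := by
    intro z hz
    have h1 := (hs z hz).2
    rw [mem_ball] at h1
    have t1 := dist_triangle z x0 c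
    have t2 := dist_triangle_left x0 c z
    constructor <;> linarith
  refine ⟨k * h0 * volume.real (ball z0 s), by positivity, fun y hy0 hy => ?_⟩
  have hD : 0 < dist y c := by linarith
  obtain ⟨j1, j2⟩ := S.ident hl hd hy0 (by linarith)
  have hsub : ball z0 s ⊆ (closedBall c l)ᶜ := by
    intro z hz
    have := (hgeo z hz).1
    simp only [mem_compl_iff, mem_closedBall, not_le]; linarith
  have a2 : ∀ᵐ z : E n, z ≠ y := by simp [ae_iff]
  have a1 : ∀ᵐ z : E n, z ≠ x0 := by simp [ae_iff]
  rw [j2, ← integral_const_mul]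
  calc k * h0 * volume.real (ball z0 s) = ∫ z in ball z0 s, k * h0 := by simp; ring
    _ ≤ ∫ z in ball z0 s, dist y c ^ b * (ker b c l y z * (u z ^ p - gl b p u c l z)) := by
        refine setIntegral_mono_on_ae (integrableOn_const measure_ball_lt_top.ne)
          ((j1.mono_set hsub).const_mul _) measurableSet_ball ?_
        filter_upwards [a2] with z hzy hz
        obtain ⟨g1, g2⟩ := hgeo z hz
        rw [← mul_assoc]
        have q := hk y z hy g1 g2 hzy
        refine mul_le_mul q ?_ hh0.le (hk0.le.trans q)
        have f1 : (2 * M) ^ p ≤ u z ^ p :=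
          Real.rpow_le_rpow (by positivity) (hs z hz).1.le S.p_pos.le
        have hlz : l ≤ dist z c := by linarith
        have f2 : ul b u c l z ^ p ≤ M ^ p :=
          Real.rpow_le_rpow (S.ul_pos hl hlz).le (S.ul_le' hl le_rfl hM hlz) S.p_pos.le
        linarith [S.gl_le hl hlz]
    _ ≤ _ := by
        refine setIntegral_mono_set (j1.const_mul _) ?_ hsub.eventuallyLE
        refine (ae_restrict_iff' measurableSet_closedBall.compl).2 ?_
        filter_upwards [a1, a2] with z hz0 hzy hz
        simp only [mem_compl_iff, mem_closedBall, not_le] at hz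
        have hK0 := ker_nonneg c hl S.hb0 (by linarith : l ≤ dist y c) hz.le hzy
        have f2 : ul b u c l z ^ p ≤ u z ^ p :=
          Real.rpow_le_rpow (S.ul_pos hl hz.le).le (hg z hz0 hz.le) S.p_pos.le
        have f3 := S.gl_le hl hz.le
        have f4 : 0 ≤ u z ^ p - gl b p u c l z := by linarith
        simp only [Pi.zero_apply]
        positivity

lemma ul_mul (c : E n) {l : ℝ} (hl : 0 < l) {y : E n} (hy : l ≤ dist y c) :
    dist y c ^ b * ul b u c l y = l ^ b * u (inversion c l y) := by
  have hD : 0 < dist y c := by linarith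
  rw [ul, Real.div_rpow hl.le hD.le]
  have : dist y c ^ b ≠ 0 := by positivity
  field_simp

lemma dist_inv_inv (c : E n) {l m : ℝ} (hl : 0 < l) (hlm : l ≤ m) {y : E n} (hy : l ≤ dist y c) :
    dist (inversion c m y) (inversion c l y) ≤ (m ^ 2 - l ^ 2) / l := by
  have hD : 0 < dist y c := by linarith
  have e : inversion c m y - inversion c l y = ((m ^ 2 - l ^ 2) / dist y c ^ 2) • (y - c) := by
    simp only [inversion, vsub_eq_sub, vadd_eq_add, add_sub_add_right_eq_sub, ← sub_smul]
    congr 1; ring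
  have h0 : 0 ≤ m ^ 2 - l ^ 2 := by nlinarith
  rw [dist_eq_norm, e, norm_smul, ← dist_eq_norm, Real.norm_of_nonneg (by positivity)]
  have : (m ^ 2 - l ^ 2) / dist y c ^ 2 * dist y c = (m ^ 2 - l ^ 2) / dist y c := by field_simp
  rw [this]
  gcongr

lemma cont_step (S : Sol n b p x0 u) {c : E n} (hc : c ≠ x0) {l : ℝ} (hl : 0 < l) (hd : l < dist x0 c)
    (hg : good b x0 u c l) : ∀ᶠ m in nhdsWithin l (Ioi l), good b x0 u c m := by
  set l1 := (l + dist x0 c) / 2 with hl1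
  have h1 : l1 < dist x0 c := by linarith
  have h2 : l < l1 := by linarith
  obtain ⟨M, hM0, hM⟩ := S.upper h1
  obtain ⟨ρ, hρ0, hρ⟩ := S.small hc (by linarith) h1 (l + 1)
  obtain ⟨η, hη0, hη1, hη⟩ := annulus S.hn c hl.le hρ0
  obtain ⟨e, he0, he⟩ := S.wlower hl hd hg hη0
  have hsub : closedBall c l1 ⊆ {x0}ᶜ := by
    intro z hz; rintro rfl; rw [mem_closedBall] at hz; linarith
  have huc := (isCompact_closedBall c l1).uniformContinuousOn_of_continuous (S.cont.mono hsub)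
  rw [Metric.uniformContinuousOn_iff] at huc
  obtain ⟨δ, hδ0, hδ⟩ := huc (e / 2 / l ^ b) (by positivity)
  have c1 : ∀ᶠ m : ℝ in nhds l, (m ^ b - l ^ b) * M < e / 2 := by
    have : ContinuousAt (fun m : ℝ => (m ^ b - l ^ b) * M) l :=
      ((Real.continuousAt_rpow_const l b (Or.inl hl.ne')).sub continuousAt_const).mul continuousAt_const
    refine this.eventually (gt_mem_nhds ?_)
    simp; positivity
  have c2 : ∀ᶠ m : ℝ in nhds l, (m ^ 2 - l ^ 2) / l < δ := by
    have : Continuous (fun m : ℝ => (m ^ 2 - l ^ 2) / l) := by fun_prop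
    refine this.continuousAt.eventually (gt_mem_nhds ?_)
    simpa using hδ0
  have c3 : ∀ᶠ m : ℝ in nhds l, m < l1 := gt_mem_nhds h2
  filter_upwards [nhdsWithin_le_nhds c1, nhdsWithin_le_nhds c2, nhdsWithin_le_nhds c3,
    self_mem_nhdsWithin] with m m1 m2 m3 m4
  rw [mem_Ioi] at m4
  have hm0 : 0 < m := hl.trans m4
  refine hρ m hm0 m3.le _ (measurableSet_ball.diff measurableSet_ball)
    (sdiff_subset.trans (ball_subset_ball (by linarith))) hη ?_
  intro y hy0 hym hyu
  refine ⟨?_, ?_⟩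
  swap
  · rw [mem_ball]; linarith
  by_contra hcon
  rw [mem_ball, not_lt] at hcon
  have hD : 0 < dist y c := by linarith
  have w := he y hy0 hcon
  have hyl : l ≤ dist y c := by linarith
  have e1 := ul_mul (b := b) (u := u) c hl hyl
  have e2 := ul_mul (b := b) (u := u) c hm0 hym
  have in1 : inversion c m y ∈ closedBall c l1 := (inv_dist_le hm0 hym).trans m3.le
  have in2 : inversion c l y ∈ closedBall c l1 := (inv_dist_le hl hyl).trans h2.le
  have e3 := hδ _ in1 _ in2 ((dist_inv_inv c hl m4.le hyl).trans_lt m2)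
  rw [Real.dist_eq] at e3
  have e4 := (le_abs_self _).trans_lt e3
  rw [lt_div_iff₀ (by positivity)] at e4
  have e5 : (m ^ b - l ^ b) * u (inversion c m y) ≤ (m ^ b - l ^ b) * M := by
    have : l ^ b ≤ m ^ b := Real.rpow_le_rpow hl.le m4.le S.hb0.le
    exact mul_le_mul_of_nonneg_left (hM _ in1) (by linarith)
  have e6 : dist y c ^ b * u y < dist y c ^ b * ul b u c m y :=
    mul_lt_mul_of_pos_left hyu (by positivity)
  linarith

lemma all_good (S : Sol n b p x0 u) {c : E n} (hc : c ≠ x0) {l : ℝ} (hl : 0 < l) (hd : l < dist x0 c) :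
    good b x0 u c l := by
  obtain ⟨l0, hl0, h0⟩ := S.start hc
  rcases le_or_gt l l0 with h | h
  · exact h0 l hl h
  have hcl : IsClosed ({m | good b x0 u c m} ∩ Icc l0 l) := by
    refine IsSeqClosed.isClosed ?_
    intro x m hx hxm
    have hmI : m ∈ Icc l0 l := isClosed_Icc.mem_of_tendsto hxm (Filter.Eventually.of_forall fun k => (hx k).2)
    refine ⟨?_, hmI⟩
    have hm0 : 0 < m := hl0.trans_le hmI.1
    intro y hy0 hym
    rcases hym.eq_or_lt with h' | h'
    · rw [ul, inversion_of_mem_sphere (mem_sphere.2 h'.symm), ← h', div_self hm0.ne']; simp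
    have hne := inv_ne hm0 (hmI.2.trans_lt hd) hym
    have hyc : y ≠ c := by rintro rfl; simp at h'; linarith
    have hca : ContinuousAt (fun m => ul b u c m y) m := by
      unfold ul
      refine ContinuousAt.mul ?_ ?_
      · refine ContinuousAt.rpow_const (by fun_prop) (Or.inl ?_)
        have : 0 < dist y c := by linarith
        positivity
      · have h1 : ContinuousAt u (inversion c m y) :=
          S.cont.continuousAt (isOpen_compl_singleton.mem_nhds hne)
        have h2 : ContinuousAt (fun m => inversion c m y) m :=
          continuousAt_const.inversion continuousAt_id continuousAt_const hyc
        exact ContinuousAt.comp (f := fun m => inversion c m y) h1 h2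
    refine le_of_tendsto (hca.tendsto.comp hxm) ?_
    filter_upwards [hxm.eventually (gt_mem_nhds h')] with k hk
    exact (hx k).1 y hy0 hk.le
  have := hcl.Icc_subset_of_forall_mem_nhdsWithin (h0 l0 hl0 le_rfl) (fun m hm => 
    S.cont_step hc (hl0.trans_le hm.2.1) (hm.2.2.trans hd) hm.1)
  exact this ⟨h.le, le_rfl⟩

lemma strict (S : Sol n b p x0 u) {y z : E n} (hy : y ≠ x0) (hyz : dist y x0 < dist z x0) : u z ≤ u y := by
  have hne : z - y ≠ 0 := by rw [sub_ne_zero]; rintro rfl; exact lt_irrefl _ hyz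
  set e := z - y with he
  have he0 : 0 < ‖e‖ := norm_pos_iff.2 hne
  have hmain : ∀ t : ℝ, 0 < t → (Real.sqrt (t / (1 + t))) ^ b * u z ≤ u y := by
    intro t ht
    set c := z + t • e with hc
    set l := Real.sqrt (t / (1 + t)) * ((1 + t) * ‖e‖) with hl
    have hl0 : 0 < l := by positivity
    have hyc' : y - c = -((1 + t) • e) := by rw [hc, add_smul, one_smul, he]; abel
    have hyc : dist y c = (1 + t) * ‖e‖ := by
      rw [dist_eq_norm, hyc', norm_neg, norm_smul, Real.norm_of_nonneg (by positivity)]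
    have hll : l ^ 2 = t * (1 + t) * ‖e‖ ^ 2 := by
      rw [hl, mul_pow, Real.sq_sqrt (by positivity)]; field_simp
    have hq : l / dist y c = Real.sqrt (t / (1 + t)) := by
      rw [hyc, hl]; field_simp
    have hinv : inversion c l y = z := by
      rw [inversion, hq, Real.sq_sqrt (by positivity), vsub_eq_sub, vadd_eq_add, hyc', smul_neg, smul_smul,
        div_mul_cancel₀ _ (by positivity), hc]
      abel
    have hlc : l < dist x0 c := by
      refine lt_of_pow_lt_pow_left₀ 2 dist_nonneg ?_
      have d1 : dist x0 c ^ 2 = ‖z - x0‖ ^ 2 + 2 * t * inner ℝ (z - x0) e + t ^ 2 * ‖e‖ ^ 2 := by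
        have : c - x0 = (z - x0) + t • e := by rw [hc]; abel
        rw [dist_comm, dist_eq_norm, this, @norm_add_sq_real, real_inner_smul_right, norm_smul, mul_pow]
        simp; ring
      have d2 : dist y x0 ^ 2 = ‖z - x0‖ ^ 2 - 2 * inner ℝ (z - x0) e + ‖e‖ ^ 2 := by
        have : y - x0 = (z - x0) - e := by rw [he]; abel
        rw [dist_eq_norm, this, @norm_sub_sq_real]
      have d3 : dist y x0 ^ 2 < dist z x0 ^ 2 := by gcongr
      rw [dist_eq_norm z] at d3
      rw [hll, d1]
      have d4 : ‖e‖ ^ 2 < 2 * inner ℝ (z - x0) e := by linarith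
      have := mul_lt_mul_of_pos_left d4 ht
      nlinarith [sq_nonneg ‖z - x0‖]
    have hcx : c ≠ x0 := by rintro h; rw [h] at hlc; simp at hlc; linarith
    have hg := S.all_good hcx hl0 hlc y hy (by
      rw [hl, hyc]
      have : Real.sqrt (t / (1 + t)) ≤ 1 := by
        rw [Real.sqrt_le_one]
        rw [div_le_one (by positivity)]; linarith
      have h3 : 0 < (1 + t) * ‖e‖ := by positivity
      nlinarith)
    rwa [ul, hq, hinv] at hg
  have hlim : Filter.Tendsto (fun t : ℝ => (Real.sqrt (t / (1 + t))) ^ b * u z) Filter.atTop (nhds (u z)) := by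
    have h1 : Filter.Tendsto (fun t : ℝ => t / (1 + t)) Filter.atTop (nhds 1) := by
      have : Filter.Tendsto (fun t : ℝ => 1 - (1 + t)⁻¹) Filter.atTop (nhds (1 - 0)) :=
        tendsto_const_nhds.sub (tendsto_inv_atTop_zero.comp (Filter.tendsto_atTop_add_const_left _ 1 Filter.tendsto_id))
      rw [sub_zero] at this
      refine this.congr' ?_
      filter_upwards [Filter.eventually_gt_atTop 0] with t ht
      field_simp; ring
    have h2 : ContinuousAt (fun x : ℝ => (Real.sqrt x) ^ b * u z) 1 := by
      refine ContinuousAt.mul (ContinuousAt.rpow_const (by fun_prop) (Or.inl (by simp))) continuousAt_const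
    have := h2.tendsto.comp h1
    simpa [Function.comp_def] using this
  refine le_of_tendsto hlim ?_
  filter_upwards [Filter.eventually_gt_atTop 0] with t ht using hmain t ht

lemma weak (S : Sol n b p x0 u) {y z : E n} (hy : y ≠ x0) (hyz : dist y x0 ≤ dist z x0) : u z ≤ u y := by
  have hy' : 0 < dist y x0 := dist_pos.2 hy
  have hz' : 0 < dist z x0 := by linarith
  have hca : ContinuousAt u z := S.cont.continuousAt (isOpen_compl_singleton.mem_nhds (dist_pos.1 hz'))
  have h1 : Continuous (fun s : ℝ => s • (z - x0) + x0) := by fun_prop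
  have h2 : Filter.Tendsto (fun s : ℝ => s • (z - x0) + x0) (nhdsWithin 1 (Ioi 1)) (nhds z) := by
    have := (h1.tendsto 1).mono_left (nhdsWithin_le_nhds (s := Ioi 1))
    simpa using this
  refine le_of_tendsto (hca.tendsto.comp h2) ?_
  filter_upwards [self_mem_nhdsWithin] with s hs
  rw [mem_Ioi] at hs
  refine S.strict hy ?_
  rw [dist_eq_norm (s • (z - x0) + x0), add_sub_cancel_right, norm_smul, ← dist_eq_norm,
    Real.norm_of_nonneg (by linarith)]
  nlinarith

end Sol
end MS

/-- For `p ≤ (n+α)/(n-α)`, a solution of the integral equation with a single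
singularity at `x⁰` is radially symmetric about `x⁰` and monotone decreasing
in `|x - x⁰|`. -/
theorem radial_symmetry_and_monotonicity_of_singular_solution
    (n : ℕ) (hn : 0 < n) (α p : ℝ) (hα0 : 0 < α) (hαn : α < n)
    (hp : p ≤ (n + α) / (n - α))
    (x0 : EuclideanSpace ℝ (Fin n)) (u : EuclideanSpace ℝ (Fin n) → ℝ)
    (hpos : ∀ x, 0 < u x)
    (hcont : ContinuousOn u {x0}ᶜ)
    (hsing : ∀ ε > (0 : ℝ), ∀ M : ℝ, ∃ x ∈ Metric.ball x0 ε, M < u x)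
    (heq : ∀ x ≠ x0, u x = ∫ y : EuclideanSpace ℝ (Fin n),
      ‖x - y‖ ^ (-((n : ℝ) - α)) * u y ^ p) :
    (∀ x₁ x₂, ‖x₁ - x0‖ = ‖x₂ - x0‖ → u x₁ = u x₂) ∧
    (∀ x₁ x₂, 0 < ‖x₁ - x0‖ → ‖x₁ - x0‖ ≤ ‖x₂ - x0‖ → u x₂ ≤ u x₁) := by
  have hna : (0 : ℝ) < n - α := by linarith
  have S : MS.Sol n ((n : ℝ) - α) p x0 u := by
    refine ⟨hn, hna, by linarith, ?_, hpos, hcont, hsing, ?_⟩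
    · rw [le_div_iff₀ hna] at hp; linarith
    · intro x hx
      simp only [dist_eq_norm]
      exact heq x hx
  have key : ∀ x₁ x₂, 0 < ‖x₁ - x0‖ → ‖x₁ - x0‖ ≤ ‖x₂ - x0‖ → u x₂ ≤ u x₁ := by
    intro x₁ x₂ h1 h2
    refine S.weak ?_ (by simpa only [dist_eq_norm] using h2)
    rintro rfl; simp at h1
  refine ⟨fun x₁ x₂ h => ?_, key⟩
  rcases (norm_nonneg (x₁ - x0)).eq_or_lt with h0 | h0
  · have e1 : x₁ = x0 := by rw [← sub_eq_zero, ← norm_eq_zero, ← h0]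
    have e2 : x₂ = x0 := by rw [← sub_eq_zero, ← norm_eq_zero, ← h, ← h0]
    rw [e1, e2]
  · exact le_antisymm (key x₂ x₁ (h ▸ h0) h.ge) (key x₁ x₂ h0 h.le)
end

section
/- Let n be a positive integer and 0 < α < n. Suppose u is a positive function on ℝⁿ, continuous on ℝⁿ \ {x₀}, unbounded in every neighborhood of x₀, and satisfying u(x) = ∫_{ℝⁿ} |x−y|^{−(n−α)} u(y)^{(n+α)/(n−α)} dy for all x ≠ x₀. Then there exists a constant C > 0 such that u(x) ≤ C |x − x₀|^{−(n−α)/2} for all x ≠ x₀. -/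
open MeasureTheory

namespace SingSol
open EuclideanGeometry Metric Set Filter Topology

abbrev Eu (n : ℕ) := EuclideanSpace ℝ (Fin n)

theorem image_inversion {n : ℕ} (c : Eu n) {R : ℝ} (hR : 0 < R) :
    inversion c R '' (ball c R \ {c}) = (closedBall c R)ᶜ := by
  ext y
  constructor
  · rintro ⟨x, ⟨hx, hxc⟩, rfl⟩
    simp only [mem_compl_iff, mem_closedBall, not_le, dist_inversion_center]
    have h1 : 0 < dist x c := dist_pos.2 hxc
    rw [mem_ball] at hx
    rw [lt_div_iff₀ h1]
    nlinarith
  · intro hy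
    simp only [mem_compl_iff, mem_closedBall, not_le] at hy
    have h1 : 0 < dist y c := hR.trans hy
    refine ⟨inversion c R y, ⟨?_, ?_⟩, inversion_inversion c hR.ne' y⟩
    · rw [mem_ball, dist_inversion_center, div_lt_iff₀ h1]
      nlinarith
    · rw [mem_singleton_iff, inversion_eq_center hR.ne']
      exact dist_pos.1 h1

theorem abs_det_inv {n : ℕ} (c x : Eu n) (R : ℝ) :
    |(((R / dist x c) ^ 2 • ((ℝ ∙ (x - c))ᗮ.reflection : Eu n →L[ℝ] Eu n)) : 
      Eu n →L[ℝ] Eu n).det| = (R / dist x c) ^ (2 * n) := by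
  have h := Submodule.det_reflection (ℝ ∙ (x - c))ᗮ
  rw [ContinuousLinearMap.det, ContinuousLinearMap.toLinearMap_smul, LinearMap.det_smul]
  have h2 : LinearMap.det (((ℝ ∙ (x - c))ᗮ.reflection : Eu n →L[ℝ] Eu n) : Eu n →ₗ[ℝ] Eu n)
    = (-1) ^ Module.finrank ℝ ((ℝ ∙ (x - c))ᗮᗮ : Submodule ℝ (Eu n)) := h
  rw [h2, abs_mul, abs_pow (-1 : ℝ), abs_neg, abs_one, one_pow, mul_one, finrank_euclideanSpace_fin,
    ← pow_mul, abs_of_nonneg]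
  rw [pow_mul]; positivity

theorem ball_diff_ae {n : ℕ} (hn : 0 < n) (c : Eu n) (R : ℝ) :
    (ball c R \ {c} : Set (Eu n)) =ᵐ[volume] ball c R := by
  have : Nonempty (Fin n) := ⟨⟨0, hn⟩⟩
  exact sdiff_null_ae_eq_self (measure_singleton c)

theorem closedBall_ae {n : ℕ} (hn : 0 < n) (c : Eu n) (R : ℝ) :
    (closedBall c R : Set (Eu n)) =ᵐ[volume] ball c R := by
  have : Nonempty (Fin n) := ⟨⟨0, hn⟩⟩
  rw [← ball_union_sphere]
  refine union_ae_eq_left_of_ae_eq_empty ?_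
  rw [ae_eq_empty]
  exact Measure.addHaar_sphere _ c R

theorem split {n : ℕ} (hn : 0 < n) (c : Eu n) {R : ℝ} (hR : 0 < R) {F : Eu n → ℝ}
    (hF : Integrable F) :
    IntegrableOn (fun z => (R / dist z c) ^ (2 * n) * F (inversion c R z)) (ball c R) ∧
    ∫ z, F z = (∫ z in ball c R, F z) +
      ∫ z in ball c R, (R / dist z c) ^ (2 * n) * F (inversion c R z) := by
  have hs : MeasurableSet (ball c R \ {c} : Set (Eu n)) :=
    measurableSet_ball.diff (measurableSet_singleton c)
  have hd : ∀ x ∈ (ball c R \ {c} : Set (Eu n)), HasFDerivWithinAt (inversion c R)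
      ((R / dist x c) ^ 2 • ((ℝ ∙ (x - c))ᗮ.reflection : Eu n →L[ℝ] Eu n)) (ball c R \ {c}) x :=
    fun x hx => (hasFDerivAt_inversion hx.2).hasFDerivWithinAt
  have hinj : InjOn (inversion c R) (ball c R \ {c} : Set (Eu n)) :=
    (inversion_injective c hR.ne').injOn
  have h1 := integrableOn_image_iff_integrableOn_abs_det_fderiv_smul volume hs hd hinj F
  have h2 := integral_image_eq_integral_abs_det_fderiv_smul volume hs hd hinj F
  rw [image_inversion c hR] at h1 h2
  simp only [abs_det_inv, smul_eq_mul] at h1 h2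
  have hae := ball_diff_ae hn c R
  rw [integrableOn_congr_set_ae hae] at h1
  rw [setIntegral_congr_set hae] at h2
  refine ⟨h1.1 hF.integrableOn, ?_⟩
  rw [← h2, ← setIntegral_congr_set (closedBall_ae hn c R)]
  exact (integral_add_compl measurableSet_closedBall hF).symm

theorem kernel_lt {n : ℕ} (c : Eu n) {R : ℝ} (hR : 0 < R) {x z : Eu n}
    (hx : dist x c < R) (hz : dist z c < R) (hzc : z ≠ c) :
    R * dist x z < dist x (inversion c R z) * dist z c := by
  have h0 : 0 < dist z c := dist_pos.2 hzc
  obtain ⟨a, ha⟩ : ∃ a, a = x - c := ⟨_, rfl⟩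
  obtain ⟨b, hb⟩ : ∃ b, b = z - c := ⟨_, rfl⟩
  have e1 : dist x z = ‖a - b‖ := by rw [dist_eq_norm]; simp [ha, hb]
  have e2 : dist x (inversion c R z) = ‖a - (R / ‖b‖) ^ 2 • b‖ := by
    rw [dist_eq_norm]
    simp only [inversion, dist_eq_norm, vsub_eq_sub, vadd_eq_add, ha, hb]
    congr 1; abel
  rw [e1, e2]
  rw [dist_eq_norm] at h0 hx hz ⊢
  rw [← hb] at h0 hz ⊢
  rw [← ha] at hx
  refine lt_of_pow_lt_pow_left₀ 2 (by positivity) ?_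
  rw [mul_pow, mul_pow, @norm_sub_sq_real, @norm_sub_sq_real, norm_smul, inner_smul_right]
  rw [Real.norm_eq_abs, abs_of_nonneg (by positivity : 0 ≤ (R / ‖b‖) ^ 2)]
  have : (‖a‖ ^ 2 - 2 * ((R / ‖b‖) ^ 2 * inner ℝ a b) + ((R / ‖b‖) ^ 2 * ‖b‖) ^ 2) * ‖b‖ ^ 2
    = ‖a‖ ^ 2 * ‖b‖ ^ 2 - 2 * R ^ 2 * inner ℝ a b + R ^ 4 := by
    field_simp
  rw [this]
  have h3 : 0 < (R ^ 2 - ‖a‖ ^ 2) * (R ^ 2 - ‖b‖ ^ 2) := by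
    apply mul_pos <;> nlinarith [norm_nonneg a, norm_nonneg b]
  nlinarith

theorem rpow_sub_le {p a b M : ℝ} (hp : 1 ≤ p) (hb : 0 ≤ b) (hba : b ≤ a) (ha : 0 < a)
    (haM : a ≤ M) : a ^ p - b ^ p ≤ p * M ^ (p - 1) * (a - b) := by
  have h := one_add_mul_self_le_rpow_one_add (s := b / a - 1) (by
    have : 0 ≤ b / a := by positivity
    linarith) hp
  rw [add_sub_cancel, Real.div_rpow hb ha.le, le_div_iff₀ (by positivity)] at h
  have h2 : a ^ p = a ^ (p - 1) * a := by
    rw [Real.rpow_sub_one ha.ne']; field_simp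
  have h3 : a ^ (p - 1) ≤ M ^ (p - 1) := Real.rpow_le_rpow ha.le haM (by linarith)
  have h4 : (1 + p * (b / a - 1)) * a ^ p = a ^ p - p * a ^ (p - 1) * (a - b) := by
    rw [h2]; field_simp; ring
  rw [h4] at h
  have : p * a ^ (p - 1) * (a - b) ≤ p * M ^ (p - 1) * (a - b) := by
    gcongr
  linarith

theorem small_pot {n : ℕ} (hn : 0 < n) {k : ℝ} (hk : 0 < k) (hkn : k < n) {ε : ℝ} (hε : 0 < ε) :
    ∃ δ : ENNReal, 0 < δ ∧ ∀ s : Set (Eu n), MeasurableSet s → volume s < δ → ∀ x : Eu n,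
      IntegrableOn (fun z => dist x z ^ (-k)) s ∧ ∫ z in s, dist x z ^ (-k) ≤ ε := by
  set h : Eu n → ℝ := fun z => ‖z‖ ^ (-k) with hh
  have hm : Measurable h := by fun_prop
  have hint : IntegrableOn h (ball 0 1) := by
    refine integrableOn_ball_of_norm_le_rpow (μ := volume) (C := 1) (α := k) (r := 1)
      (by simpa using Nat.succ_le_of_lt hn) (by simpa using hkn) (ae_of_all _ fun z => ?_) hm.aestronglyMeasurable
    rw [Real.norm_eq_abs, abs_of_nonneg (by positivity), one_mul]
  have hfin : ∫⁻ z, ENNReal.ofReal ((ball (0 : Eu n) 1).indicator h z) ≠ ⊤ := by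
    have := (integrable_indicator_iff measurableSet_ball).2 hint
    exact this.lintegral_lt_top.ne
  obtain ⟨δ, hδ, hδ'⟩ := exists_pos_setLIntegral_lt_of_measure_lt hfin
    (ε := ENNReal.ofReal (ε / 2)) (by simpa using hε)
  refine ⟨min δ (ENNReal.ofReal (ε / 2)), lt_min hδ (by simpa using hε), fun s hs hvs x => ?_⟩
  have key : ∫⁻ z in s, ENNReal.ofReal (dist x z ^ (-k)) ≤ ENNReal.ofReal ε := by
    have mp : MeasurePreserving (fun z : Eu n => z + x) volume volume :=
      measurePreserving_add_right volume x
    have e : ∫⁻ z in s, ENNReal.ofReal (dist x z ^ (-k)) =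
        ∫⁻ z in (fun z : Eu n => z + x) ⁻¹' s, ENNReal.ofReal (h z) := by
      rw [← mp.setLIntegral_comp_preimage hs (by fun_prop)]
      simp [hh, dist_eq_norm]
    rw [e]
    have hvt : volume ((fun z : Eu n => z + x) ⁻¹' s) = volume s :=
      mp.measure_preimage hs.nullMeasurableSet
    calc _ ≤ ∫⁻ z in (fun z : Eu n => z + x) ⁻¹' s, 
          (ENNReal.ofReal ((ball (0 : Eu n) 1).indicator h z) + 1) := by
          refine lintegral_mono fun z => ?_
          by_cases hz : z ∈ ball (0 : Eu n) 1
          · rw [indicator_of_mem hz]; exact le_self_add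
          · rw [indicator_of_notMem hz]
            simp only [ENNReal.ofReal_zero, zero_add, ENNReal.ofReal_le_one, hh]
            refine Real.rpow_le_one_of_one_le_of_nonpos ?_ (by linarith)
            simpa using hz
      _ = (∫⁻ z in (fun z : Eu n => z + x) ⁻¹' s, 
          ENNReal.ofReal ((ball (0 : Eu n) 1).indicator h z)) + volume s := by
          rw [lintegral_add_right _ measurable_const]; simp [hvt]
      _ ≤ ENNReal.ofReal (ε / 2) + ENNReal.ofReal (ε / 2) := by
          gcongr
          · refine (hδ' _ ?_).le
            rw [hvt]; exact hvs.trans_le (min_le_left _ _)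
          · exact (hvs.trans_le (min_le_right _ _)).le
      _ = ENNReal.ofReal ε := by
          rw [← ENNReal.ofReal_add (by positivity) (by positivity)]; simp
  have hmm : Measurable (fun z : Eu n => dist x z ^ (-k)) := by fun_prop
  constructor
  · refine ⟨hmm.aestronglyMeasurable, ?_⟩
    rw [hasFiniteIntegral_iff_ofReal (ae_of_all _ fun z => by positivity)]
    exact key.trans_lt ENNReal.ofReal_lt_top
  · rw [integral_eq_lintegral_of_nonneg_ae (ae_of_all _ fun z => by positivity)
      hmm.aestronglyMeasurable]
    exact ENNReal.toReal_le_of_le_ofReal hε.le key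

structure Sol (n : ℕ) (k p : ℝ) (o : Eu n) (u : Eu n → ℝ) : Prop where
  hn : 0 < n
  hk : 0 < k
  hkn : k < n
  hp : 1 ≤ p
  hkp : k + k * p = 2 * n
  pos : ∀ x, 0 < u x
  cont : ContinuousOn u {o}ᶜ
  sing : ∀ ε > (0 : ℝ), ∀ M : ℝ, ∃ x ∈ ball o ε, M < u x
  int : ∀ x ≠ o, Integrable (fun y => dist x y ^ (-k) * u y ^ p)
  eq : ∀ x ≠ o, u x = ∫ y, dist x y ^ (-k) * u y ^ p

noncomputable def ul {n : ℕ} (k : ℝ) (u : Eu n → ℝ) (c : Eu n) (R : ℝ) (x : Eu n) : ℝ :=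
  (R / dist x c) ^ k * u (inversion c R x)

noncomputable def G {n : ℕ} (k : ℝ) (c : Eu n) (R : ℝ) (x z : Eu n) : ℝ :=
  (R / dist z c) ^ k * dist x (inversion c R z) ^ (-k)

def Bad {n : ℕ} (k : ℝ) (o : Eu n) (u : Eu n → ℝ) (c : Eu n) (R : ℝ) : Set (Eu n) :=
  {x | x ∈ ball c R ∧ x ≠ c ∧ inversion c R x ≠ o ∧ ul k u c R x < u x}

theorem kk {k R d A : ℝ} (hR : 0 < R) (hd : 0 < d) (hA : 0 ≤ A) :
    (R / d) ^ k * A ^ (-k) = R ^ k * (A * d) ^ (-k) := by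
  rw [Real.div_rpow hR.le hd.le, Real.mul_rpow hA hd.le, Real.rpow_neg hd.le]
  field_simp

theorem id1 {n : ℕ} {k p t D U : ℝ} (hkp : k + k * p = 2 * n) (ht : 0 < t) (hU : 0 ≤ U) :
    t ^ (2 * n) * (D * U ^ p) = (t ^ k * D) * (t ^ k * U) ^ p := by
  rw [Real.mul_rpow (by positivity) hU, ← Real.rpow_mul ht.le]
  have : t ^ (2 * n) = t ^ k * t ^ (k * p) := by
    rw [← Real.rpow_add ht, hkp, ← Real.rpow_natCast]; push_cast; rfl
  rw [this]; ring

theorem id3 {k s t D : ℝ} (hs : 0 < s) (ht : 0 < t) (hD : 0 ≤ D) :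
    s ^ k * (t ^ k * (s * t * D) ^ (-k)) = D ^ (-k) := by
  rw [Real.mul_rpow (by positivity) hD, Real.mul_rpow hs.le ht.le, Real.rpow_neg hs.le,
    Real.rpow_neg ht.le]
  have := (Real.rpow_pos_of_pos hs k).ne'
  have := (Real.rpow_pos_of_pos ht k).ne'
  field_simp

variable {n : ℕ} {k p : ℝ} {o : Eu n} {u : Eu n → ℝ}

theorem G_eq {c x z : Eu n} {R : ℝ} (hR : 0 < R) (hz : z ≠ c) :
    G k c R x z = R ^ k * (dist x (inversion c R z) * dist z c) ^ (-k) :=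
  kk hR (dist_pos.2 hz) dist_nonneg

theorem G_nonneg {c x z : Eu n} {R : ℝ} (hR : 0 < R) : 0 ≤ G k c R x z := by
  unfold G; positivity

theorem G_lt (hk : 0 < k) {c x z : Eu n} {R : ℝ} (hR : 0 < R) (hx : dist x c < R)
    (hz : dist z c < R) (hzc : z ≠ c) (hxz : x ≠ z) : G k c R x z < dist x z ^ (-k) := by
  have h0 : 0 < dist x z := dist_pos.2 hxz
  have h := kernel_lt c hR hx hz hzc
  have h1 : dist x z ^ (-k) = R ^ k * (R * dist x z) ^ (-k) := by
    rw [Real.mul_rpow hR.le h0.le, Real.rpow_neg hR.le]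
    have := (Real.rpow_pos_of_pos hR k).ne'
    field_simp
  rw [G_eq hR hzc, h1]
  have := Real.rpow_lt_rpow_of_neg (by positivity) h (by linarith : -k < 0)
  gcongr

theorem ul_pos (h : Sol n k p o u) {c x : Eu n} {R : ℝ} (hR : 0 < R) (hx : x ≠ c) :
    0 < ul k u c R x := by
  have := dist_pos.2 hx
  have := h.pos (inversion c R x)
  unfold ul; positivity

theorem ae_ball (hn : 0 < n) (s : Set (Eu n)) (hs : s.Countable) (c : Eu n) (R : ℝ) :
    ∀ᵐ z ∂(volume.restrict (ball c R)), z ∈ ball c R ∧ z ∉ s := by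
  have : Nonempty (Fin n) := ⟨⟨0, hn⟩⟩
  have h1 : ∀ᵐ z ∂(volume : Measure (Eu n)), z ∉ s := hs.ae_notMem _
  filter_upwards [ae_restrict_mem measurableSet_ball, ae_restrict_of_ae h1] with z a b
  exact ⟨a, b⟩

theorem repr (h : Sol n k p o u) {c x : Eu n} {R : ℝ} (hR : 0 < R)
    (hxc : x ≠ c) (hxo : x ≠ o) (hxi : inversion c R x ≠ o) :
    IntegrableOn (fun z => (dist x z ^ (-k) - G k c R x z) * (u z ^ p - ul k u c R z ^ p))
      (ball c R) ∧
    u x - ul k u c R x =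
      ∫ z in ball c R, (dist x z ^ (-k) - G k c R x z) * (u z ^ p - ul k u c R z ^ p) := by
  obtain ⟨a1, a2⟩ := split h.hn c hR (h.int x hxo)
  obtain ⟨b1, b2⟩ := split h.hn c hR (h.int _ hxi)
  have a0 := (h.int x hxo).integrableOn (s := ball c R)
  have b0 := (h.int _ hxi).integrableOn (s := ball c R)
  have hae := ae_ball h.hn {c} (countable_singleton c) c R
  have hdx : 0 < dist x c := dist_pos.2 hxc
  have e1 : (fun z => (R / dist z c) ^ (2 * n) * (dist x (inversion c R z) ^ (-k) *
      u (inversion c R z) ^ p)) =ᵐ[volume.restrict (ball c R)]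
      fun z => G k c R x z * ul k u c R z ^ p := by
    filter_upwards [hae] with z hz
    have := dist_pos.2 hz.2
    exact id1 h.hkp (by positivity) (h.pos _).le
  have e2 : (fun z => (R / dist x c) ^ k * (dist (inversion c R x) z ^ (-k) *
      u z ^ p)) =ᵐ[volume.restrict (ball c R)]
      fun z => G k c R x z * u z ^ p := by
    filter_upwards [hae] with z hz
    rw [G_eq hR hz.2, ← dist_inversion_mul_dist_center_eq hxc hz.2, ← mul_assoc,
      kk hR hdx dist_nonneg]
  have e3 : (fun z => (R / dist x c) ^ k * ((R / dist z c) ^ (2 * n) *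
      (dist (inversion c R x) (inversion c R z) ^ (-k) *
      u (inversion c R z) ^ p))) =ᵐ[volume.restrict (ball c R)]
      fun z => dist x z ^ (-k) * ul k u c R z ^ p := by
    filter_upwards [hae] with z hz
    have hz' := dist_pos.2 hz.2
    rw [id1 h.hkp (by positivity) (h.pos _).le, ← mul_assoc, dist_inversion_inversion hxc hz.2]
    have : R ^ 2 / (dist x c * dist z c) * dist x z = (R / dist x c) * (R / dist z c) * dist x z := by
      field_simp
    rw [this, id3 (by positivity) (by positivity) dist_nonneg]
    rfl
  have i1 := (integrable_congr e1).1 a1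
  have i2 := (integrable_congr e2).1 (b0.const_mul _)
  have i3 := (integrable_congr e3).1 (b1.const_mul _)
  have hu : u x = (∫ z in ball c R, dist x z ^ (-k) * u z ^ p) + 
      ∫ z in ball c R, G k c R x z * ul k u c R z ^ p := by
    rw [h.eq x hxo, a2, integral_congr_ae e1]
  have hul : ul k u c R x = (∫ z in ball c R, G k c R x z * u z ^ p) + 
      ∫ z in ball c R, dist x z ^ (-k) * ul k u c R z ^ p := by
    rw [ul, h.eq _ hxi, b2, mul_add, ← integral_const_mul, ← integral_const_mul,
      integral_congr_ae e2, integral_congr_ae e3]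
  have efun : (fun z => (dist x z ^ (-k) - G k c R x z) * (u z ^ p - ul k u c R z ^ p)) =
    fun z => (dist x z ^ (-k) * u z ^ p + G k c R x z * ul k u c R z ^ p)
      - (G k c R x z * u z ^ p + dist x z ^ (-k) * ul k u c R z ^ p) := by
    ext z; ring
  rw [efun]
  refine ⟨(a0.add i1).sub (i2.add i3), ?_⟩
  have hA := integral_add a0 i1
  have hB := integral_add i2 i3
  have hS := integral_sub (a0.add i1) (i2.add i3)
  simp only [Pi.add_apply] at hS
  rw [hS, hA, hB, ← hu, ← hul]

theorem meas_u (h : Sol n k p o u) : Measurable u :=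
  measurable_of_continuousOn_compl_singleton o h.cont

theorem meas_inv (c : Eu n) (R : ℝ) : Measurable (inversion c R) := by
  refine measurable_of_continuousOn_compl_singleton c ?_
  exact ContinuousOn.inversion continuousOn_const continuousOn_const continuousOn_id
    (fun x hx => hx)

theorem meas_ul (h : Sol n k p o u) (c : Eu n) (R : ℝ) : Measurable (ul k u c R) := by
  have h1 := (meas_u h).comp (meas_inv c R)
  have h2 : Measurable (fun x : Eu n => (R / dist x c) ^ k) := by fun_prop
  exact h2.mul h1

theorem meas_bad (h : Sol n k p o u) (c : Eu n) (R : ℝ) : MeasurableSet (Bad k o u c R) := by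
  have h1 : MeasurableSet {x : Eu n | x ∈ ball c R} := measurableSet_ball
  have h2 : MeasurableSet {x : Eu n | x ≠ c} := (measurableSet_singleton c).compl
  have h3 : MeasurableSet {x : Eu n | inversion c R x ≠ o} :=
    (meas_inv c R) (measurableSet_singleton o).compl
  exact h1.inter (h2.inter (h3.inter (measurableSet_lt (meas_ul h c R) (meas_u h))))

theorem narrow (h : Sol n k p o u) (c : Eu n) {M : ℝ} (hM : 0 < M) :
    ∃ δ : ENNReal, 0 < δ ∧ ∀ R : ℝ, 0 < R → (∀ x ∈ ball c R, u x ≤ M) → o ∉ ball c R →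
      volume (Bad k o u c R) < δ → Bad k o u c R = ∅ := by
  have hp0 : 0 < p := by linarith [h.hp]
  have hQ : 0 < p * M ^ (p - 1) := by positivity
  obtain ⟨δ, hδ, H⟩ := small_pot h.hn h.hk h.hkn (ε := 1 / (2 * (p * M ^ (p - 1)))) (by positivity)
  refine ⟨δ, hδ, fun R hR hu ho hv => ?_⟩
  by_contra hne
  obtain ⟨x1, hx1⟩ := nonempty_iff_ne_empty.2 hne
  set E := Bad k o u c R with hE
  have hEm : MeasurableSet E := meas_bad h c R
  set S := (fun x => u x - ul k u c R x) '' E with hS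
  have hbdd : BddAbove S := by
    refine ⟨M, ?_⟩
    rintro _ ⟨x, hx, rfl⟩
    have := ul_pos h hR hx.2.1
    have := hu x hx.1
    simp only
    linarith
  set A := sSup S
  have hle : ∀ x ∈ E, u x - ul k u c R x ≤ A := fun x hx => le_csSup hbdd ⟨x, hx, rfl⟩
  have hA : 0 < A := by
    have := hle x1 hx1
    have := hx1.2.2.2
    linarith
  have hstep : ∀ x ∈ E, u x - ul k u c R x ≤ A / 2 := by
    intro x hx
    have hxo : x ≠ o := fun e => ho (e ▸ hx.1)
    obtain ⟨r1, r2⟩ := repr h hR hx.2.1 hxo hx.2.2.1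
    obtain ⟨s1, s2⟩ := H E hEm hv x
    have hEB : E ⊆ ball c R := fun z hz => hz.1
    rw [r2]
    have hi : IntegrableOn (E.indicator fun z => dist x z ^ (-k) * (p * M ^ (p - 1) * A))
        (ball c R) := 
      ((integrable_indicator_iff hEm).2 (s1.mul_const _)).integrableOn
    have hmono : ∫ z in ball c R, (dist x z ^ (-k) - G k c R x z) * (u z ^ p - ul k u c R z ^ p)
        ≤ ∫ z in ball c R, E.indicator (fun z => dist x z ^ (-k) * (p * M ^ (p - 1) * A)) z := by
      refine integral_mono_ae r1 hi ?_
      filter_upwards [ae_ball h.hn {c, x, inversion c R o}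
        ((Set.toFinite _).countable) c R] with z hz
      simp only [mem_insert_iff, mem_singleton_iff, not_or] at hz
      obtain ⟨hzB, hzc, hzx, hzi⟩ := hz
      have hul := ul_pos h hR hzc
      have hK := G_lt h.hk hR hx.1 hzB hzc (Ne.symm hzx)
      have hG : 0 ≤ G k c R x z := G_nonneg hR
      by_cases hzE : z ∈ E
      · rw [indicator_of_mem hzE]
        have hlt := hzE.2.2.2
        have q1 := rpow_sub_le h.hp hul.le hlt.le (h.pos z) (hu z hzB)
        have q2 : u z ^ p - ul k u c R z ^ p ≤ p * M ^ (p - 1) * A :=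
          q1.trans (by gcongr; exact hle z hzE)
        have q3 : 0 ≤ u z ^ p - ul k u c R z ^ p :=
          sub_nonneg.2 (Real.rpow_le_rpow hul.le hlt.le hp0.le)
        exact mul_le_mul (by linarith) q2 q3 (by positivity)
      · rw [indicator_of_notMem hzE]
        have hzi' : inversion c R z ≠ o := by
          rintro rfl
          exact hzi (inversion_inversion c hR.ne' z).symm
        have : u z ≤ ul k u c R z := by
          by_contra hc
          exact hzE ⟨hzB, hzc, hzi', not_le.1 hc⟩
        have := Real.rpow_le_rpow (h.pos z).le this hp0.le
        exact mul_nonpos_of_nonneg_of_nonpos (by linarith) (by linarith)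
    refine hmono.trans ?_
    rw [setIntegral_indicator hEm, inter_eq_self_of_subset_right hEB, integral_mul_const]
    calc _ ≤ 1 / (2 * (p * M ^ (p - 1))) * (p * M ^ (p - 1) * A) := by gcongr
      _ = A / 2 := by field_simp
  have : A ≤ A / 2 := by
    refine csSup_le ⟨_, x1, hx1, rfl⟩ ?_
    rintro _ ⟨x, hx, rfl⟩
    exact hstep x hx
  linarith

theorem cont_ul (h : Sol n k p o u) {c : Eu n} {R : ℝ} (hR : 0 < R) {x : Eu n} (hx : x ≠ c)
    (hxi : inversion c R x ≠ o) :
    ContinuousAt (fun q : ℝ × Eu n => ul k u c q.1 q.2) (R, x) := by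
  unfold ul
  have hd := dist_pos.2 hx
  refine ContinuousAt.mul ?_ ?_
  · refine ContinuousAt.rpow_const ?_ (Or.inl (by simp only; positivity))
    exact ContinuousAt.div continuousAt_fst (by fun_prop) hd.ne'
  · refine ContinuousAt.comp (g := u) (f := fun q : ℝ × Eu n => inversion c q.1 q.2) ?_ ?_
    · exact h.cont.continuousAt (isOpen_compl_singleton.mem_nhds hxi)
    · exact ContinuousAt.inversion continuousAt_const continuousAt_fst continuousAt_snd hx

theorem cont_inv {c : Eu n} {R : ℝ} {x : Eu n} (hx : x ≠ c) :
    ContinuousAt (fun q : ℝ × Eu n => inversion c q.1 q.2) (R, x) :=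
  ContinuousAt.inversion continuousAt_const continuousAt_fst continuousAt_snd hx

theorem strict (h : Sol n k p o u) {c : Eu n} {R M : ℝ} (hR : 0 < R) (hRo : R < dist o c)
    (hM : ∀ x ∈ ball c R, u x ≤ M) (hB : Bad k o u c R = ∅) {x : Eu n} (hx : x ∈ ball c R)
    (hxc : x ≠ c) (hxi : inversion c R x ≠ o) : u x < ul k u c R x := by
  have hp0 : 0 < p := by linarith [h.hp]
  have hxo : x ≠ o := by
    rintro rfl
    rw [mem_ball] at hx
    linarith
  by_contra hcon
  obtain ⟨r1, r2⟩ := repr h hR hxc hxo hxi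
  have hcl : ∀ z ∈ ball c R, z ≠ c → inversion c R z ≠ o → u z ≤ ul k u c R z := by
    intro z h1 h2 h3
    by_contra h4
    have : z ∈ Bad k o u c R := ⟨h1, h2, h3, not_le.1 h4⟩
    simp [hB] at this
  have hae := ae_ball h.hn {c, x, inversion c R o} ((Set.toFinite _).countable) c R
  have hle : ∀ᵐ z ∂(volume.restrict (ball c R)), u z ≤ ul k u c R z ∧
      G k c R x z < dist x z ^ (-k) := by
    filter_upwards [hae] with z hz
    simp only [mem_insert_iff, mem_singleton_iff, not_or] at hz
    obtain ⟨hzB, hzc, hzx, hzi⟩ := hz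
    have hK := G_lt h.hk hR hx hzB hzc (Ne.symm hzx)
    have hzi' : inversion c R z ≠ o := by
      rintro rfl
      exact hzi (inversion_inversion c hR.ne' z).symm
    exact ⟨hcl z hzB hzc hzi', hK⟩
  have hnn : 0 ≤ᵐ[volume.restrict (ball c R)] fun z => 
      (dist x z ^ (-k) - G k c R x z) * (ul k u c R z ^ p - u z ^ p) := by
    filter_upwards [hle] with z hz
    have := Real.rpow_le_rpow (h.pos z).le hz.1 hp0.le
    exact mul_nonneg (by linarith [hz.2]) (by linarith)
  have hneg : (fun z => (dist x z ^ (-k) - G k c R x z) * (ul k u c R z ^ p - u z ^ p)) =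
      fun z => -((dist x z ^ (-k) - G k c R x z) * (u z ^ p - ul k u c R z ^ p)) := by
    ext z; ring
  have hint : Integrable (fun z => (dist x z ^ (-k) - G k c R x z) * (ul k u c R z ^ p - u z ^ p))
      (volume.restrict (ball c R)) := by rw [hneg]; exact r1.neg
  have hz0 : ∫ z in ball c R, (dist x z ^ (-k) - G k c R x z) * (ul k u c R z ^ p - u z ^ p) = 0 := by
    refine le_antisymm ?_ (integral_nonneg_of_ae hnn)
    rw [hneg, integral_neg, ← r2]
    linarith
  rw [integral_eq_zero_iff_of_nonneg_ae hnn hint] at hz0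
  have hbd : ∀ᵐ z ∂(volume.restrict (ball c R)), ul k u c R z ≤ M := by
    filter_upwards [hz0, hle, ae_restrict_mem measurableSet_ball] with z hz hz2 hz3
    have h1 : dist x z ^ (-k) - G k c R x z ≠ 0 := by linarith [hz2.2]
    have h2 : ul k u c R z ^ p - u z ^ p = 0 := by
      simpa [h1] using hz
    by_contra hc
    have h3 := hM z hz3
    have := Real.rpow_lt_rpow (h.pos z).le (by linarith : u z < ul k u c R z) hp0
    linarith
  obtain ⟨y, hy, hyM⟩ := h.sing (dist o c - R) (by linarith) (max M (u o))
  have hyo : y ≠ o := by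
    rintro rfl
    exact absurd (le_max_right M (u y)) (not_le.2 hyM)
  have hyc : R < dist y c := by
    rw [mem_ball] at hy
    have := dist_triangle o y c
    rw [dist_comm o y] at this
    linarith
  have hd : 0 < dist y c := hR.trans hyc
  obtain ⟨z, hz⟩ : ∃ z, z = inversion c R y := ⟨_, rfl⟩
  have hzy : inversion c R z = y := by rw [hz, inversion_inversion c hR.ne']
  have hzc : z ≠ c := by
    rw [hz, Ne, inversion_eq_center hR.ne']; exact dist_pos.1 hd
  have hdz : dist z c = R ^ 2 / dist y c := by rw [hz, dist_inversion_center]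
  have hzB : z ∈ ball c R := by
    rw [mem_ball, hdz, div_lt_iff₀ hd]; nlinarith
  have hzM : M < ul k u c R z := by
    unfold ul
    rw [hzy, hdz]
    have e : R / (R ^ 2 / dist y c) = dist y c / R := by field_simp
    rw [e]
    have h1 : 1 ≤ (dist y c / R) ^ k :=
      Real.one_le_rpow ((one_le_div hR).2 hyc.le) h.hk.le
    have h2 := (le_max_left M (u o)).trans_lt hyM
    nlinarith [h.pos y]
  have hcz : ContinuousAt (fun w => ul k u c R w) z :=
    ContinuousAt.comp (g := fun q : ℝ × Eu n => ul k u c q.1 q.2) (f := fun w => (R, w))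
      (cont_ul h hR hzc (by rw [hzy]; exact hyo)) (by fun_prop)
  have hev : ∀ᶠ w in 𝓝 z, M < ul k u c R w ∧ w ∈ ball c R :=
    (hcz.eventually (lt_mem_nhds hzM)).and (isOpen_ball.mem_nhds hzB)
  obtain ⟨V, hV, hVo, hVz⟩ := _root_.mem_nhds_iff.1 hev
  have hVpos := hVo.measure_pos volume ⟨z, hVz⟩
  rw [ae_restrict_iff' measurableSet_ball] at hbd
  have : volume V = 0 := by
    refine measure_mono_null (fun w hw => ?_) hbd
    have := hV hw
    simp only [mem_compl_iff, mem_setOf_eq, not_forall]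
    exact ⟨this.2, not_le.2 this.1⟩
  exact hVpos.ne' this

theorem bad_tendsto (h : Sol n k p o u) {c : Eu n} {r : ℝ}
    (hae : ∀ᵐ x ∂(volume : Measure (Eu n)), ∀ᶠ R in 𝓝[>] r, x ∉ Bad k o u c R) :
    Tendsto (fun R => volume (Bad k o u c R)) (𝓝[>] r) (𝓝 0) := by
  have := tendsto_measure_of_ae_tendsto_indicator (μ := (volume : Measure (Eu n))) (𝓝[>] r)
    (A := ∅) (As := fun R => Bad k o u c R) (B := ball c (r + 1)) MeasurableSet.empty
    (fun R => meas_bad h c R) measurableSet_ball measure_ball_lt_top.ne ?_ ?_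
  · simpa using this
  · have : ∀ᶠ R in 𝓝[>] r, R < r + 1 := nhdsWithin_le_nhds (gt_mem_nhds (by linarith))
    filter_upwards [this] with R hR x hx
    exact ball_subset_ball hR.le hx.1
  · filter_upwards [hae] with x hx
    filter_upwards [hx] with R hR
    simp [hR]

theorem main_claim (h : Sol n k p o u) {c : Eu n} {L : ℝ} (hL : 0 < L) (hLo : L < dist o c) :
    Bad k o u c L = ∅ := by
  have : Nonempty (Fin n) := ⟨⟨0, h.hn⟩⟩
  have hsub : closedBall c L ⊆ {o}ᶜ := by
    intro z hz hzo
    rw [mem_singleton_iff] at hzo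
    subst hzo
    rw [mem_closedBall] at hz
    linarith
  obtain ⟨M, hM⟩ := (isCompact_closedBall c L).bddAbove_image (h.cont.mono hsub)
  have hM' : ∀ z ∈ closedBall c L, u z ≤ M := fun z hz => hM ⟨z, hz, rfl⟩
  have hM0 : 0 < M := (h.pos c).trans_le (hM' c (mem_closedBall_self hL.le))
  obtain ⟨δ, hδ, hnar⟩ := narrow h c hM0
  have hMR : ∀ R ≤ L, ∀ z ∈ ball c R, u z ≤ M := fun R hR z hz =>
    hM' z (ball_subset_closedBall (ball_subset_ball hR hz))
  have hoR : ∀ R ≤ L, o ∉ ball c R := fun R hR ho => by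
    rw [mem_ball] at ho; linarith
  -- passing to larger radii
  have hright : ∀ r, 0 ≤ r → r < L → 
      (∀ᵐ x ∂(volume : Measure (Eu n)), ∀ᶠ R in 𝓝[>] r, x ∉ Bad k o u c R) →
      ∀ᶠ R in 𝓝[>] r, Bad k o u c R = ∅ := by
    intro r hr hrL hae
    have h1 := (bad_tendsto h hae).eventually (gt_mem_nhds hδ)
    have h2 : ∀ᶠ R in 𝓝[>] r, R < L := nhdsWithin_le_nhds (gt_mem_nhds hrL)
    filter_upwards [h1, h2, self_mem_nhdsWithin] with R g1 g2 g3
    exact hnar R (hr.trans_lt g3) (hMR R g2.le) (hoR R g2.le) g1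
  -- start
  have hstart : ∀ᶠ R in 𝓝[>] (0 : ℝ), Bad k o u c R = ∅ := by
    refine hright 0 le_rfl hL ?_
    have : ∀ᵐ x ∂(volume : Measure (Eu n)), x ≠ c := by
      simpa using (countable_singleton c).ae_notMem (volume : Measure (Eu n))
    filter_upwards [this] with x hx
    have hd := dist_pos.2 hx
    have : ∀ᶠ R in 𝓝[>] (0 : ℝ), R < dist x c := nhdsWithin_le_nhds (gt_mem_nhds hd)
    filter_upwards [this] with R hR hb
    have := hb.1
    rw [mem_ball] at this
    linarith
  obtain ⟨a, ⟨haB, haL⟩, ha0⟩ := ((hstart.and (nhdsWithin_le_nhds (gt_mem_nhds hL))).and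
    self_mem_nhdsWithin).exists
  have ha0 : 0 < a := ha0
  have hclosed : IsClosed ({R | Bad k o u c R = ∅} ∩ Icc a L) := by
    refine isClosed_of_closure_subset fun r hr => ?_
    have hrI : r ∈ Icc a L := 
      isClosed_Icc.closure_subset_iff.2 inter_subset_right hr
    refine ⟨?_, hrI⟩
    by_contra hne
    obtain ⟨x, hx⟩ := nonempty_iff_ne_empty.2 hne
    obtain ⟨hx1, hx2, hx3, hx4⟩ := hx
    have hr0 : 0 < r := ha0.trans_le hrI.1
    have c1 : ContinuousAt (fun R => ul k u c R x) r :=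
      ContinuousAt.comp (g := fun q : ℝ × Eu n => ul k u c q.1 q.2) (f := fun R => (R, x))
        (cont_ul h hr0 hx2 hx3) (by fun_prop)
    have c2 : ContinuousAt (fun R => inversion c R x) r :=
      ContinuousAt.comp (g := fun q : ℝ × Eu n => inversion c q.1 q.2) (f := fun R => (R, x))
        (cont_inv hx2) (by fun_prop)
    have e1 := c1.eventually (gt_mem_nhds hx4)
    have e2 := c2.eventually (isOpen_compl_singleton.mem_nhds hx3)
    have e3 : ∀ᶠ R in 𝓝 r, dist x c < R := lt_mem_nhds hx1
    obtain ⟨R, hR, ⟨g1, g2⟩, g3⟩ := ((mem_closure_iff_frequently.1 hr).and_eventually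
      ((e1.and e2).and e3)).exists
    have : x ∈ Bad k o u c R := ⟨g3, hx2, g2, g1⟩
    rw [hR.1] at this
    exact this
  refine hclosed.Icc_subset_of_forall_mem_nhdsWithin haB ?_ ⟨haL.le, le_rfl⟩
  rintro r ⟨hrB, hra, hrL⟩
  have hr0 : 0 < r := ha0.trans_le hra
  refine hright r hr0.le hrL ?_
  have e0 : ∀ᵐ x ∂(volume : Measure (Eu n)), x ∉ ({c, inversion c r o} : Set (Eu n)) :=
    (Set.toFinite _).countable.ae_notMem _
  have e1 : ∀ᵐ x ∂(volume : Measure (Eu n)), x ∉ sphere c r := by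
    exact measure_eq_zero_iff_ae_notMem.1 (Measure.addHaar_sphere (volume : Measure (Eu n)) c r)
  filter_upwards [e0, e1] with x hx hxs
  simp only [mem_insert_iff, mem_singleton_iff, not_or] at hx
  obtain ⟨hxc, hxi⟩ := hx
  have hxi' : inversion c r x ≠ o := by
    rintro rfl
    exact hxi (inversion_inversion c hr0.ne' x).symm
  rcases lt_or_ge r (dist x c) with hlt | hge
  · have : ∀ᶠ R in 𝓝[>] r, R < dist x c := nhdsWithin_le_nhds (gt_mem_nhds hlt)
    filter_upwards [this] with R hR hb
    have := hb.1
    rw [mem_ball] at this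
    linarith
  · have hxB : x ∈ ball c r := lt_of_le_of_ne hge hxs
    have hst := strict h hr0 (hrL.trans hLo) (hMR r hrL.le) hrB hxB hxc hxi'
    have c1 : ContinuousAt (fun R => ul k u c R x) r :=
      ContinuousAt.comp (g := fun q : ℝ × Eu n => ul k u c q.1 q.2) (f := fun R => (R, x))
        (cont_ul h hr0 hxc hxi') (by fun_prop)
    have := nhdsWithin_le_nhds (s := Ioi r) (c1.eventually (lt_mem_nhds hst))
    filter_upwards [this] with R hR hb
    exact absurd hb.2.2.2 (not_lt.2 (le_of_lt hR))

theorem harnack (h : Sol n k p o u) {z y : Eu n} (hzo : z ≠ o) (hy : y ∈ ball z (dist z o / 4)) :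
    u z ≤ 2 ^ (k / 2) * u y := by
  have hdo : 0 < dist z o := dist_pos.2 hzo
  have h1k : (1 : ℝ) ≤ 2 ^ (k / 2) := Real.one_le_rpow (by norm_num) (by linarith [h.hk])
  by_cases hyz : y = z
  · subst hyz
    nlinarith [h.pos y]
  rw [mem_ball] at hy
  have hd : 0 < dist y z := dist_pos.2 hyz
  obtain ⟨c, hc⟩ : ∃ c, c = z - (y - z) := ⟨_, rfl⟩
  have hzc' : z - c = y - z := by rw [hc]; abel
  have hzc : dist z c = dist y z := by rw [dist_eq_norm, hzc', dist_eq_norm]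
  obtain ⟨R, hR⟩ : ∃ R, R = √2 * dist y z := ⟨_, rfl⟩
  have hs1 : (1 : ℝ) < √2 := by
    rw [Real.lt_sqrt] <;> norm_num
  have hs2 : √2 < 2 := by
    rw [Real.sqrt_lt'] <;> norm_num
  have hR0 : 0 < R := by rw [hR]; positivity
  have hRd : R / dist z c = √2 := by
    rw [hR, hzc]; field_simp
  have hRo : R < dist o c := by
    have := dist_triangle_right z o c
    rw [hzc] at this
    nlinarith
  have hinv : inversion c R z = y := by
    rw [inversion, hRd, Real.sq_sqrt (by norm_num), vsub_eq_sub, hzc', vadd_eq_add, hc, two_smul]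
    abel
  have hB := main_claim h hR0 hRo
  by_contra hcon
  have : z ∈ Bad k o u c R := by
    refine ⟨?_, ?_, ?_, ?_⟩
    · rw [mem_ball, hzc, hR]; nlinarith
    · exact dist_pos.1 (hzc ▸ hd)
    · rw [hinv]
      rintro rfl
      rw [dist_comm z y] at hy
      linarith
    · rw [ul, hRd, hinv]
      have : (√2 : ℝ) ^ k = 2 ^ (k / 2) := by
        rw [Real.sqrt_eq_rpow, ← Real.rpow_mul (by norm_num)]; congr 1; ring
      rw [this]
      exact not_le.1 hcon
  rw [hB] at this
  exact this

theorem final (h : Sol n k p o u) : ∃ C > (0 : ℝ), ∀ x ≠ o, u x ≤ C * dist x o ^ (-(k / 2)) := by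
  have : Nonempty (Fin n) := ⟨⟨0, h.hn⟩⟩
  have hk := h.hk
  have hkn := h.hkn
  have hp0 : 0 < p := by linarith [h.hp]
  obtain ⟨ω, hω⟩ : ∃ ω, ω = volume.real (ball (0 : Eu n) 1) := ⟨_, rfl⟩
  have hω0 : 0 < ω := by
    rw [hω]; exact ENNReal.toReal_pos (measure_ball_pos _ _ one_pos).ne' measure_ball_lt_top.ne
  have hkp1 : k * (p - 1) = 2 * (n - k) := by linarith [h.hkp]
  have hp1 : 0 < p - 1 := by
    by_contra hc
    nlinarith
  obtain ⟨C1, hC1⟩ : ∃ C1 : ℝ, C1 = (2 ^ (k / 2)) ^ p / ω := ⟨_, rfl⟩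
  have hC10 : 0 < C1 := by rw [hC1]; positivity
  refine ⟨C1 ^ (1 / (p - 1)) * 4 ^ (k / 2), by positivity, fun x hx => ?_⟩
  have hd : 0 < dist x o := dist_pos.2 hx
  obtain ⟨r, hr⟩ : ∃ r, r = dist x o / 4 := ⟨_, rfl⟩
  have hr0 : 0 < r := by rw [hr]; positivity
  have hux := h.pos x
  have hvol : volume.real (ball x r) = r ^ n * ω := by
    rw [hω, Measure.real, Measure.real, Measure.addHaar_ball _ _ hr0.le, ENNReal.toReal_mul,
      ENNReal.toReal_ofReal (by positivity)]
    simp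
  have hlow : r ^ (-k) * (u x / 2 ^ (k / 2)) ^ p * (r ^ n * ω) ≤ u x := by
    conv_rhs => rw [h.eq x hx]
    calc r ^ (-k) * (u x / 2 ^ (k / 2)) ^ p * (r ^ n * ω)
        = ∫ y in ball x r, r ^ (-k) * (u x / 2 ^ (k / 2)) ^ p := by
          rw [setIntegral_const, hvol, smul_eq_mul, mul_comm]
      _ ≤ ∫ y in ball x r, dist x y ^ (-k) * u y ^ p := by
          refine integral_mono_ae (integrableOn_const measure_ball_lt_top.ne)
            (h.int x hx).integrableOn ?_
          filter_upwards [ae_ball h.hn {x} (countable_singleton x) x r] with y hy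
          have hyx : 0 < dist x y := by rw [dist_comm]; exact dist_pos.2 hy.2
          have hyr : dist x y ≤ r := by rw [dist_comm]; exact (mem_ball.1 hy.1).le
          have := harnack h hx (hr ▸ hy.1)
          have h2 : u x / 2 ^ (k / 2) ≤ u y := by
            rw [div_le_iff₀ (by positivity)]; linarith
          have h3 : r ^ (-k) ≤ dist x y ^ (-k) :=
            Real.rpow_le_rpow_of_nonpos hyx hyr (by linarith)
          have h4 : (u x / 2 ^ (k / 2)) ^ p ≤ u y ^ p := 
            Real.rpow_le_rpow (by positivity) h2 hp0.le
          exact mul_le_mul h3 h4 (by positivity) (by positivity)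
      _ ≤ _ := setIntegral_le_integral (h.int x hx)
          (ae_of_all _ fun y => by have := h.pos y; simp only [Pi.zero_apply]; positivity)
  have hpow : u x ^ (p - 1) ≤ C1 * r ^ (k - n) := by
    have e1 : u x ^ p = u x ^ (p - 1) * u x := by
      rw [Real.rpow_sub_one hux.ne']; field_simp
    have e2 : r ^ (-k) * r ^ n = (r ^ (k - n))⁻¹ := by
      rw [← Real.rpow_neg hr0.le, ← Real.rpow_natCast, ← Real.rpow_add hr0]; congr 1; ring
    have e3 : r ^ (-k) * (u x / 2 ^ (k / 2)) ^ p * (r ^ n * ω) =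
        u x ^ (p - 1) / (C1 * r ^ (k - n)) * u x := by
      rw [Real.div_rpow hux.le (by positivity), e1]
      calc _ = (r ^ (-k) * r ^ n) * (u x ^ (p - 1) * u x / (2 ^ (k / 2)) ^ p * ω) := by ring
        _ = _ := by rw [e2, hC1]; field_simp
    rw [e3] at hlow
    have h5 : u x ^ (p - 1) / (C1 * r ^ (k - n)) ≤ 1 := by
      by_contra hc
      push Not at hc
      nlinarith
    rwa [div_le_one (by positivity)] at h5
  have h6 : (u x ^ (p - 1)) ^ (1 / (p - 1)) ≤ (C1 * r ^ (k - n)) ^ (1 / (p - 1)) :=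
    Real.rpow_le_rpow (by positivity) hpow (by positivity)
  rw [← Real.rpow_mul hux.le, mul_one_div_cancel hp1.ne', Real.rpow_one,
    Real.mul_rpow hC10.le (by positivity), ← Real.rpow_mul hr0.le] at h6
  have e7 : (k - n) * (1 / (p - 1)) = -(k / 2) := by
    field_simp
    linarith
  rw [e7, hr, Real.div_rpow hd.le (by norm_num), Real.rpow_neg (by norm_num : (0 : ℝ) ≤ 4),
    div_inv_eq_mul] at h6
  linarith

end SingSol

/-- A singular solution of the critical integral equation satisfies the upper
bound `u(x) ≤ C |x - x₀|^{-(n-α)/2}`. -/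
theorem upper_bound_of_singular_solution_critical
    (n : ℕ) (hn : 0 < n) (α : ℝ) (hα0 : 0 < α) (hαn : α < n)
    (x0 : EuclideanSpace ℝ (Fin n)) (u : EuclideanSpace ℝ (Fin n) → ℝ)
    (hpos : ∀ x, 0 < u x)
    (hcont : ContinuousOn u {x0}ᶜ)
    (hsing : ∀ ε > (0 : ℝ), ∀ M : ℝ, ∃ x ∈ Metric.ball x0 ε, M < u x)
    (heq : ∀ x ≠ x0, u x = ∫ y : EuclideanSpace ℝ (Fin n),
      ‖x - y‖ ^ (-((n : ℝ) - α)) * u y ^ (((n : ℝ) + α) / ((n : ℝ) - α))) :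
    ∃ C > (0 : ℝ), ∀ x ≠ x0, u x ≤ C * ‖x - x0‖ ^ (-(((n : ℝ) - α) / 2)) := by
  have hk : 0 < (n : ℝ) - α := by linarith
  have hsol : SingSol.Sol n ((n : ℝ) - α) (((n : ℝ) + α) / ((n : ℝ) - α)) x0 u := by
    refine ⟨hn, hk, by linarith, ?_, ?_, hpos, hcont, hsing, ?_, ?_⟩
    · rw [one_le_div hk]; linarith
    · field_simp; ring
    · intro x hx
      by_contra hc
      have h1 := heq x hx
      have h2 := hpos x
      simp only [dist_eq_norm] at hc
      rw [integral_undef hc] at h1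
      linarith
    · intro x hx
      simp only [dist_eq_norm]
      exact heq x hx
  obtain ⟨C, hC, hC'⟩ := SingSol.final hsol
  refine ⟨C, hC, fun x hx => ?_⟩
  rw [← dist_eq_norm]
  exact hC' x hx
end

section
/- Let n be a positive integer, 0 < α < n, and p > 0. Suppose u is a positive function on ℝⁿ satisfying u(x) = ∫_{ℝⁿ} |x−y|^{−(n−α)} u(y)^p dy for all x ≠ 0, and define its Kelvin transform v(x) = |x|^{−(n−α)} u(x/|x|²) for x ≠ 0. Then v satisfies v(x) = ∫_{ℝⁿ} |x−y|^{−(n−α)} |y|^{−(n−α)(α*−p)} v(y)^p dy for all x ≠ 0, where α* = (n+α)/(n−α). -/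
open MeasureTheory

lemma kelvin_det {n : ℕ} (x : EuclideanSpace ℝ (Fin n)) :
    |((1 / dist x 0) ^ 2 • ((ℝ ∙ (x - 0))ᗮ.reflection :
      EuclideanSpace ℝ (Fin n) →L[ℝ] EuclideanSpace ℝ (Fin n))).det| = ((‖x‖ ^ 2)⁻¹) ^ n := by
  have h : ((ℝ ∙ (x - 0))ᗮ.reflection :
      EuclideanSpace ℝ (Fin n) →L[ℝ] EuclideanSpace ℝ (Fin n)).det ^ 2 = 1 := by
    rw [pow_two]
    unfold ContinuousLinearMap.det
    rw [← LinearMap.det_comp]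
    convert LinearMap.det_id
    ext y : 1
    simp
  have h2 := (sq_eq_sq_iff_abs_eq_abs _ _).1 (h.trans (one_pow 2).symm)
  rw [abs_one] at h2
  unfold ContinuousLinearMap.det at h2 ⊢
  rw [ContinuousLinearMap.toLinearMap_smul, LinearMap.det_smul, abs_mul, h2]
  simp

lemma kelvin_inv {n : ℕ} (x : EuclideanSpace ℝ (Fin n)) :
    EuclideanGeometry.inversion 0 1 x = (‖x‖ ^ 2)⁻¹ • x := by
  simp [EuclideanGeometry.inversion]

lemma kelvin_cov {n : ℕ} (hn : 0 < n) (g : EuclideanSpace ℝ (Fin n) → ℝ) :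
    ∫ y, g y = ∫ y : EuclideanSpace ℝ (Fin n) in {0}ᶜ,
      ((‖y‖ ^ 2)⁻¹) ^ n * g (EuclideanGeometry.inversion 0 1 y) := by
  have : Nonempty (Fin n) := ⟨⟨0, hn⟩⟩
  have him : EuclideanGeometry.inversion (0 : EuclideanSpace ℝ (Fin n)) 1 '' {0}ᶜ = {0}ᶜ := by
    rw [Set.image_compl_eq (EuclideanGeometry.inversion_bijective 0 one_ne_zero)]
    simp
  have := integral_image_eq_integral_abs_det_fderiv_smul volume
    (s := ({0}ᶜ : Set (EuclideanSpace ℝ (Fin n)))) (measurableSet_singleton 0).compl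
    (fun x hx => (EuclideanGeometry.hasFDerivAt_inversion (R := 1)
      (show x ≠ 0 from hx)).hasFDerivWithinAt)
    (EuclideanGeometry.inversion_injective 0 one_ne_zero).injOn g
  simp only [kelvin_det, him, smul_eq_mul] at this
  rw [← this, restrict_compl_singleton]

theorem kelvin_transform_equation
    (n : ℕ) (hn : 0 < n) (α p : ℝ) (hα0 : 0 < α) (hαn : α < n) (hp : 0 < p)
    (u v : EuclideanSpace ℝ (Fin n) → ℝ)
    (hpos : ∀ x, 0 < u x)
    (heq : ∀ x ≠ (0 : EuclideanSpace ℝ (Fin n)),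
      u x = ∫ y : EuclideanSpace ℝ (Fin n),
        ‖x - y‖ ^ (-((n : ℝ) - α)) * u y ^ p)
    (hv : ∀ x ≠ (0 : EuclideanSpace ℝ (Fin n)),
      v x = ‖x‖ ^ (-((n : ℝ) - α)) * u ((‖x‖ ^ 2)⁻¹ • x)) :
    ∀ x ≠ (0 : EuclideanSpace ℝ (Fin n)),
      v x = ∫ y : EuclideanSpace ℝ (Fin n),
        ‖x - y‖ ^ (-((n : ℝ) - α)) *
          ‖y‖ ^ (-((n : ℝ) - α) * (((n : ℝ) + α) / ((n : ℝ) - α) - p)) *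
          v y ^ p := by
  intro x hx
  have : Nonempty (Fin n) := ⟨⟨0, hn⟩⟩
  have hx' : EuclideanGeometry.inversion 0 1 x ≠ (0 : EuclideanSpace ℝ (Fin n)) := by
    rwa [Ne, EuclideanGeometry.inversion_eq_center one_ne_zero]
  rw [hv x hx, ← kelvin_inv, heq _ hx',
    kelvin_cov hn (fun y => ‖EuclideanGeometry.inversion 0 1 x - y‖ ^ (-((n : ℝ) - α)) * u y ^ p),
    ← integral_const_mul]
  have hr := restrict_compl_singleton
    (μ := (volume : Measure (EuclideanSpace ℝ (Fin n)))) (a := 0)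
  conv_rhs => rw [← hr]
  refine setIntegral_congr_fun (measurableSet_singleton 0).compl ?_
  intro y hy
  have hy : y ≠ 0 := hy
  have hx0 : 0 < ‖x‖ := norm_pos_iff.2 hx
  have hy0 : 0 < ‖y‖ := norm_pos_iff.2 hy
  have hd : ‖EuclideanGeometry.inversion 0 1 x - EuclideanGeometry.inversion 0 1 y‖
      = ‖x‖⁻¹ * ‖y‖⁻¹ * ‖x - y‖ := by
    rw [← dist_eq_norm, EuclideanGeometry.dist_inversion_inversion hx hy]
    simp [dist_eq_norm, mul_comm]
  have hna : (n : ℝ) - α ≠ 0 := by linarith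
  have hpw : ((‖y‖ ^ 2)⁻¹) ^ n = ‖y‖ ^ (-(2 * n : ℝ)) := by
    rw [Real.rpow_neg hy0.le, inv_pow, ← pow_mul, ← Real.rpow_natCast]
    simp
  have hxc : ‖x‖ ^ (-((n : ℝ) - α)) * ‖x‖⁻¹ ^ (-((n : ℝ) - α)) = 1 := by
    rw [← Real.mul_rpow hx0.le (inv_nonneg.2 hx0.le), mul_inv_cancel₀ hx0.ne', Real.one_rpow]
  have hyc : ‖y‖ ^ (-(2 * n : ℝ)) * ‖y‖⁻¹ ^ (-((n : ℝ) - α)) =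
      ‖y‖ ^ (-((n : ℝ) - α) * (((n : ℝ) + α) / ((n : ℝ) - α) - p)) *
        (‖y‖ ^ (-((n : ℝ) - α))) ^ p := by
    rw [Real.inv_rpow hy0.le, ← Real.rpow_neg hy0.le, ← Real.rpow_mul hy0.le,
      ← Real.rpow_add hy0, ← Real.rpow_add hy0]
    congr 1
    field_simp
    ring
  simp only []
  rw [hv y hy, ← kelvin_inv, hd, Real.mul_rpow (by positivity) (norm_nonneg _),
    Real.mul_rpow (by positivity) (by positivity), hpw,
    Real.mul_rpow (by positivity) (hpos _).le]
  set A := u (EuclideanGeometry.inversion 0 1 y) ^ p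
  set B := ‖x - y‖ ^ (-((n : ℝ) - α))
  calc _ = (‖x‖ ^ (-((n : ℝ) - α)) * ‖x‖⁻¹ ^ (-((n : ℝ) - α))) *
        (‖y‖ ^ (-(2 * n : ℝ)) * ‖y‖⁻¹ ^ (-((n : ℝ) - α))) * (A * B) := by ring
    _ = _ := by rw [hxc, hyc]; ring
end

section
/- Let n be a positive integer, 0 < α < n, and p > n/(n−α). Then there exists a constant c > 0 such that the function u(x) = c |x|^{−α/(p−1)} satisfies u(x) = ∫_{ℝⁿ} |x−y|^{−(n−α)} u(y)^p dy for every x ≠ 0. -/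
open MeasureTheory

lemma aux_radial (n : ℕ) (hn : 0 < n) (a b : ℝ) (hb : 0 < b) (han : a < n) (hab : (n:ℝ) < a + b) :
    Integrable (fun y : EuclideanSpace ℝ (Fin n) => ‖y‖ ^ (-a) * (1 + ‖y‖) ^ (-b)) := by
  have : Nonempty (Fin n) := ⟨⟨0, hn⟩⟩
  have key := integrable_fun_norm_addHaar (volume : Measure (EuclideanSpace ℝ (Fin n)))
    (f := fun t : ℝ => t ^ (-a) * (1 + t) ^ (-b))
  rw [key]
  have hpow : ∀ t : ℝ, 0 < t → t ^ (n - 1) * t ^ (-a) = t ^ ((n:ℝ) - 1 - a) := by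
    intro t ht
    rw [← Real.rpow_natCast, ← Real.rpow_add ht, Nat.cast_sub hn]
    push_cast; congr 1
  rw [← Set.Ioc_union_Ioi_eq_Ioi (zero_le_one (α := ℝ))]
  have hmeas : Measurable (fun y : ℝ => y ^ (n - 1) • (y ^ (-a) * (1 + y) ^ (-b))) := by
    simp only [smul_eq_mul]
    fun_prop
  simp only [finrank_euclideanSpace, Fintype.card_fin]
  apply IntegrableOn.union
  · have h1 : IntegrableOn (fun t : ℝ => t ^ ((n:ℝ) - 1 - a)) (Set.Ioc 0 1) := by
      rw [← intervalIntegrable_iff_integrableOn_Ioc_of_le zero_le_one]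
      exact intervalIntegral.intervalIntegrable_rpow' (by linarith)
    refine h1.mono' hmeas.aestronglyMeasurable ?_
    filter_upwards [ae_restrict_mem measurableSet_Ioc] with t ht
    have ht0 := ht.1
    rw [smul_eq_mul, ← mul_assoc, hpow t ht0, Real.norm_of_nonneg (by positivity)]
    apply mul_le_of_le_one_right (by positivity)
    exact Real.rpow_le_one_of_one_le_of_nonpos (by linarith) (by linarith)
  · have h1 : IntegrableOn (fun t : ℝ => t ^ ((n:ℝ) - 1 - a - b)) (Set.Ioi 1) := 
      integrableOn_Ioi_rpow_of_lt (by linarith) one_pos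
    refine h1.mono' hmeas.aestronglyMeasurable ?_
    filter_upwards [ae_restrict_mem measurableSet_Ioi] with t ht
    have ht0 : 0 < t := lt_trans one_pos ht
    rw [smul_eq_mul, ← mul_assoc, hpow t ht0, Real.norm_of_nonneg (by positivity),
      sub_eq_add_neg _ b, Real.rpow_add ht0]
    apply mul_le_mul_of_nonneg_left _ (by positivity)
    exact Real.rpow_le_rpow_of_nonpos ht0 (by linarith) (by linarith)

lemma aux_pt (a b s t : ℝ) (ha : 0 < a) (hb : 0 < b) (hs : 0 ≤ s) (hst : s ≤ t) (h : 1 ≤ s + t) :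
    s ^ (-a) * t ^ (-b) ≤ 3 ^ b * (s ^ (-a) * (1 + s) ^ (-b)) := by
  have h1 : t ^ (-b) ≤ ((1 + s) / 3) ^ (-b) :=
    Real.rpow_le_rpow_of_nonpos (by linarith) (by linarith) (by linarith)
  have h2 : ((1 + s) / 3) ^ (-b) = 3 ^ b * (1 + s) ^ (-b) := by
    rw [Real.div_rpow (by linarith) (by norm_num), Real.rpow_neg (by norm_num : (0:ℝ) ≤ 3)]
    field_simp
  rw [h2] at h1
  calc _ ≤ s ^ (-a) * (3 ^ b * (1 + s) ^ (-b)) := mul_le_mul_of_nonneg_left h1 (by positivity)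
    _ = _ := by ring

lemma aux_int (n : ℕ) (hn : 0 < n) (a b : ℝ) (ha : 0 < a) (hb : 0 < b) (han : a < n) (hbn : b < n)
    (hab : (n:ℝ) < a + b) (e : EuclideanSpace ℝ (Fin n)) (he : ‖e‖ = 1) :
    Integrable (fun y : EuclideanSpace ℝ (Fin n) => ‖e - y‖ ^ (-a) * ‖y‖ ^ (-b)) := by
  have h1 := ((aux_radial n hn a b hb han hab).comp_sub_left e).const_mul (3 ^ b)
  have h2 := (aux_radial n hn b a ha hbn (by linarith)).const_mul (3 ^ a)
  refine (h1.add h2).mono' ?_ ?_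
  · apply Measurable.aestronglyMeasurable
    fun_prop
  · refine Filter.Eventually.of_forall fun y => ?_
    have htri : 1 ≤ ‖e - y‖ + ‖y‖ := by
      rw [← he]; simpa using norm_add_le (e - y) y
    rw [Real.norm_of_nonneg (by positivity)]
    simp only [Pi.add_apply]
    have p1 : 0 ≤ 3 ^ b * (‖e - y‖ ^ (-a) * (1 + ‖e - y‖) ^ (-b)) := by positivity
    have p2 : 0 ≤ 3 ^ a * (‖y‖ ^ (-b) * (1 + ‖y‖) ^ (-a)) := by positivity
    rcases le_total ‖e - y‖ ‖y‖ with h | h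
    · have := aux_pt a b _ _ ha hb (norm_nonneg _) h htri
      linarith
    · have := aux_pt b a _ _ hb ha (norm_nonneg _) h (by linarith)
      rw [mul_comm (‖y‖ ^ (-b))] at this
      linarith

lemma aux_pos (n : ℕ) (hn : 0 < n) (a b : ℝ) (ha : 0 < a) (hb : 0 < b) (han : a < n) (hbn : b < n)
    (hab : (n:ℝ) < a + b) (e : EuclideanSpace ℝ (Fin n)) (he : ‖e‖ = 1) :
    0 < ∫ y : EuclideanSpace ℝ (Fin n), ‖e - y‖ ^ (-a) * ‖y‖ ^ (-b) := by
  have : Nonempty (Fin n) := ⟨⟨0, hn⟩⟩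
  rw [integral_pos_iff_support_of_nonneg (fun y => by positivity)
    (aux_int n hn a b ha hb han hbn hab e he)]
  have hsub : ({e, 0} : Set (EuclideanSpace ℝ (Fin n)))ᶜ ⊆
      Function.support (fun y : EuclideanSpace ℝ (Fin n) => ‖e - y‖ ^ (-a) * ‖y‖ ^ (-b)) := by
    intro y hy
    simp only [Set.mem_compl_iff, Set.mem_insert_iff, Set.mem_singleton_iff, not_or] at hy
    have h1 : 0 < ‖e - y‖ := norm_pos_iff.2 (sub_ne_zero.2 (Ne.symm hy.1))
    have h2 : 0 < ‖y‖ := norm_pos_iff.2 hy.2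
    exact ne_of_gt (by positivity)
  refine lt_of_lt_of_le ?_ (measure_mono hsub)
  refine IsOpen.measure_pos _ (Set.toFinite _).isClosed.isOpen_compl ?_
  exact (Set.toFinite _).infinite_compl.nonempty

lemma aux_scale (n : ℕ) (a b : ℝ) (e x : EuclideanSpace ℝ (Fin n)) (he : ‖e‖ = 1) (hx : x ≠ 0) :
    ∫ y : EuclideanSpace ℝ (Fin n), ‖x - y‖ ^ (-a) * ‖y‖ ^ (-b) =
      ‖x‖ ^ ((n:ℝ) - a - b) * ∫ y : EuclideanSpace ℝ (Fin n), ‖e - y‖ ^ (-a) * ‖y‖ ^ (-b) := by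
  have hr : 0 < ‖x‖ := norm_pos_iff.2 hx
  set r := ‖x‖ with hrdef
  have hn2 : ‖e‖ = ‖r⁻¹ • x‖ := by
    rw [norm_smul, he, norm_inv, Real.norm_of_nonneg hr.le, ← hrdef, inv_mul_cancel₀ hr.ne']
  obtain ⟨R, hR⟩ : ∃ R : EuclideanSpace ℝ (Fin n) ≃ₗᵢ[ℝ] EuclideanSpace ℝ (Fin n),
      R e = r⁻¹ • x := ⟨_, Submodule.reflection_sub hn2⟩
  have hxe : x = r • R e := by rw [hR, smul_inv_smul₀ hr.ne']
  have h1 := Measure.integral_comp_smul (volume : Measure (EuclideanSpace ℝ (Fin n)))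
    (fun y => ‖x - y‖ ^ (-a) * ‖y‖ ^ (-b)) r
  have h2 := (R.measurePreserving).integral_comp R.toHomeomorph.measurableEmbedding
    (fun y => ‖x - r • y‖ ^ (-a) * ‖r • y‖ ^ (-b))
  have h3 : ∀ y, ‖x - r • R y‖ ^ (-a) * ‖r • R y‖ ^ (-b) =
      r ^ (-a - b) * (‖e - y‖ ^ (-a) * ‖y‖ ^ (-b)) := by
    intro y
    rw [hxe, ← smul_sub, ← map_sub, norm_smul, norm_smul, R.norm_map, R.norm_map,
      Real.norm_of_nonneg hr.le, Real.mul_rpow hr.le (norm_nonneg _),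
      Real.mul_rpow hr.le (norm_nonneg _), sub_eq_add_neg (-a) b, Real.rpow_add hr]
    ring
  simp only [h3] at h2
  rw [integral_const_mul, h1, finrank_euclideanSpace, Fintype.card_fin, smul_eq_mul,
    abs_of_pos (by positivity)] at h2
  have h4 : r ^ ((n:ℝ) - a - b) = r ^ n * r ^ (-a - b) := by
    rw [← Real.rpow_natCast, ← Real.rpow_add hr]; congr 1; ring
  rw [h4, mul_assoc, h2, mul_inv_cancel_left₀ (by positivity)]

theorem singular_power_solution
    (n : ℕ) (hn : 0 < n) (α p : ℝ) (hα0 : 0 < α) (hαn : α < n)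
    (hp : (n : ℝ) / ((n : ℝ) - α) < p) :
    ∃ c > (0 : ℝ), ∀ x ≠ (0 : EuclideanSpace ℝ (Fin n)),
      c * ‖x‖ ^ (-(α / (p - 1))) =
        ∫ y : EuclideanSpace ℝ (Fin n),
          ‖x - y‖ ^ (-((n : ℝ) - α)) * (c * ‖y‖ ^ (-(α / (p - 1)))) ^ p := by
  have hna : 0 < (n:ℝ) - α := by linarith
  have hp' : (n:ℝ) < p * (n - α) := (div_lt_iff₀ hna).1 hp
  have hp1 : 0 < p - 1 := by
    by_contra h
    nlinarith
  have hq : α / (p - 1) * (p - 1) = α := div_mul_cancel₀ _ hp1.ne'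
  set q := α / (p - 1) with hqdef
  have hq0 : 0 < q := by positivity
  have hb0 : 0 < q * p := by nlinarith
  have hbn : q * p < n := by
    have : q * p = α * p / (p - 1) := by rw [hqdef]; ring
    rw [this, div_lt_iff₀ hp1]; nlinarith
  have hab : (n:ℝ) < (n - α) + q * p := by nlinarith
  set e : EuclideanSpace ℝ (Fin n) := EuclideanSpace.single ⟨0, hn⟩ 1 with hedef
  have he : ‖e‖ = 1 := by simp [hedef]
  have hA := aux_pos n hn (n - α) (q * p) hna hb0 (by linarith) hbn hab e he
  have hS := fun x hx => aux_scale n (n - α) (q * p) e x he hx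
  generalize (∫ y : EuclideanSpace ℝ (Fin n), ‖e - y‖ ^ (-((n:ℝ) - α)) * ‖y‖ ^ (-(q * p))) = A
    at hA hS
  obtain ⟨c, hc⟩ : ∃ c, c = A ^ (-(1 / (p - 1))) := ⟨_, rfl⟩
  have hc0 : 0 < c := hc ▸ Real.rpow_pos_of_pos hA _
  refine ⟨c, hc0, fun x hx => ?_⟩
  have hcA : c ^ p * A = c := by
    rw [hc, ← Real.rpow_mul hA.le]
    nth_rewrite 2 [← Real.rpow_one A]
    rw [← Real.rpow_add hA]
    congr 1
    field_simp
    ring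
  have h1 : ∀ y : EuclideanSpace ℝ (Fin n),
      ‖x - y‖ ^ (-((n : ℝ) - α)) * (c * ‖y‖ ^ (-q)) ^ p =
      c ^ p * (‖x - y‖ ^ (-((n : ℝ) - α)) * ‖y‖ ^ (-(q * p))) := by
    intro y
    rw [Real.mul_rpow hc0.le (by positivity), ← Real.rpow_mul (norm_nonneg _), neg_mul]
    ring
  simp only [h1]
  rw [integral_const_mul, hS x hx]
  have h2 : (n:ℝ) - (n - α) - q * p = -q := by linarith
  rw [h2, mul_left_comm, hcA, mul_comm]
end
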